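/- arXiv:2302.10678 — 3 statements merged into one kernel-verified Lean document; each statement's English description precedes it below -/
import Mathlib

section
/- Let φ : ℝ → ℝ be continuous and non-increasing. Then for every u ∈ ℝ, lim_{λ → 0⁺} φ_λ(u) = φ(u). -/
/-- The resolvent `J_λ = (I - λφ)⁻¹` of a (continuous, non-increasing) function
`φ : ℝ → ℝ`. -/
noncomputable def Jlam (φ : ℝ → ℝ) (lam : ℝ) : ℝ → ℝ :=
  Function.invFun (fun u : ℝ => u - lam * φ u)

/-- The Yosida approximation `φ_λ(u) = (J_λ(u) - u)/λ`. -/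
noncomputable def yosida (φ : ℝ → ℝ) (lam : ℝ) (u : ℝ) : ℝ :=
  (Jlam φ lam u - u) / lam

/- The map `x ↦ x - λ φ x` is expanding because `φ` is non-increasing. Comparing the preimage
`J_λ u` of `u` with the preimage `u` of `u - λ φ u` gives `|J_λ u - u| ≤ λ |φ u|`, so `J_λ u → u`
as `λ → 0⁺`. The resolvent equation says `φ_λ u = φ (J_λ u)`, and continuity of `φ` concludes. -/

open Filter Set Topology

section OrderedGroup

variable {G : Type*} [AddCommGroup G] [LinearOrder G] [IsOrderedAddMonoid G] {ψ : G → G}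

theorem tendsto_id_sub_antitone_atTop (hψ : Antitone ψ) :
    Tendsto (fun x => x - ψ x) atTop atTop := by
  simp only [sub_eq_add_neg]
  refine tendsto_atTop_add_right_of_le' _ (-ψ 0) tendsto_id ?_
  filter_upwards [eventually_ge_atTop 0] with x hx
  exact neg_le_neg (hψ hx)

theorem tendsto_id_sub_antitone_atBot (hψ : Antitone ψ) :
    Tendsto (fun x => x - ψ x) atBot atBot := by
  simp only [sub_eq_add_neg]
  refine tendsto_atBot_add_right_of_ge' _ (-ψ 0) tendsto_id ?_
  filter_upwards [eventually_le_atBot 0] with x hx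
  exact neg_le_neg (hψ hx)

theorem abs_sub_le_abs_id_sub_antitone_sub (hψ : Antitone ψ) (x y : G) :
    |x - y| ≤ |(x - ψ x) - (y - ψ y)| := by
  wlog hxy : y ≤ x generalizing x y
  · simpa only [abs_sub_comm] using this y x (le_of_not_ge hxy)
  calc |x - y| = x - y := abs_of_nonneg (sub_nonneg.2 hxy)
    _ ≤ (x - y) + (ψ y - ψ x) := le_add_of_nonneg_right (sub_nonneg.2 (hψ hxy))
    _ = (x - ψ x) - (y - ψ y) := by abel
    _ ≤ |(x - ψ x) - (y - ψ y)| := le_abs_self _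

end OrderedGroup

theorem surjective_id_sub_antitone {ψ : ℝ → ℝ} (hc : Continuous ψ) (hψ : Antitone ψ) :
    Function.Surjective (fun x => x - ψ x) :=
  (continuous_id.sub hc).surjective (tendsto_id_sub_antitone_atTop hψ)
    (tendsto_id_sub_antitone_atBot hψ)

section Resolvent

variable {φ : ℝ → ℝ} {lam : ℝ}

theorem Jlam_sub_mul_apply_Jlam (hc : Continuous φ) (hφ : Antitone φ) (hlam : 0 ≤ lam) (u : ℝ) :
    Jlam φ lam u - lam * φ (Jlam φ lam u) = u :=
  Function.rightInverse_invFun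
    (surjective_id_sub_antitone (hc.const_mul lam) (hφ.const_mul hlam)) u

theorem abs_Jlam_sub_le (hc : Continuous φ) (hφ : Antitone φ) (hlam : 0 ≤ lam) (u : ℝ) :
    |Jlam φ lam u - u| ≤ lam * |φ u| :=
  calc |Jlam φ lam u - u|
      ≤ |(Jlam φ lam u - lam * φ (Jlam φ lam u)) - (u - lam * φ u)| :=
        abs_sub_le_abs_id_sub_antitone_sub (hφ.const_mul hlam) _ _
    _ = |lam * φ u| := by rw [Jlam_sub_mul_apply_Jlam hc hφ hlam, sub_sub_cancel]
    _ = lam * |φ u| := by rw [abs_mul, abs_of_nonneg hlam]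

theorem tendsto_Jlam (hc : Continuous φ) (hφ : Antitone φ) (u : ℝ) :
    Tendsto (fun lam => Jlam φ lam u) (𝓝[≥] 0) (𝓝 u) := by
  have bound_tendsto : Tendsto (fun lam => lam * |φ u|) (𝓝[≥] 0) (𝓝 0) :=
    ((continuous_mul_const |φ u|).tendsto' 0 0 (zero_mul _)).mono_left nhdsWithin_le_nhds
  rw [tendsto_iff_dist_tendsto_zero]
  refine squeeze_zero' (Eventually.of_forall fun _ => dist_nonneg) ?_ bound_tendsto
  filter_upwards [self_mem_nhdsWithin] with lam hlam
  exact abs_Jlam_sub_le hc hφ hlam u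

theorem yosida_eq_apply_Jlam (hc : Continuous φ) (hφ : Antitone φ) (hlam : 0 < lam) (u : ℝ) :
    yosida φ lam u = φ (Jlam φ lam u) := by
  rw [yosida, div_eq_iff hlam.ne']
  linarith [Jlam_sub_mul_apply_Jlam hc hφ hlam.le u]

end Resolvent

/-- For a continuous non-increasing `φ`, the Yosida approximations converge
pointwise: `φ_λ(u) → φ(u)` as `λ → 0⁺`. -/
theorem yosida_tendsto (φ : ℝ → ℝ) (hc : Continuous φ)
    (hmono : ∀ u₁ u₂ : ℝ, u₁ ≤ u₂ → φ u₂ ≤ φ u₁) :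
    ∀ u : ℝ, Filter.Tendsto (fun lam : ℝ => yosida φ lam u)
      (nhdsWithin 0 (Set.Ioi 0)) (nhds (φ u)) := by
  intro u
  have hφ : Antitone φ := fun u₁ u₂ => hmono u₁ u₂
  have resolvent_tendsto : Tendsto (fun lam => Jlam φ lam u) (𝓝[>] 0) (𝓝 u) :=
    (tendsto_Jlam hc hφ u).mono_left (nhdsWithin_mono 0 Ioi_subset_Ici_self)
  refine ((hc.tendsto u).comp resolvent_tendsto).congr' ?_
  filter_upwards [self_mem_nhdsWithin] with lam hlam
  exact (yosida_eq_apply_Jlam hc hφ hlam u).symm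
end

section
/- Let κ ∈ ℝ, let φ : ℝ → ℝ be continuously differentiable and non-increasing, let f(u) := φ(u) + κu, and for λ > 0 define f_λ(u) := φ_λ(u) + κu. Then every f_λ is differentiable on ℝ and for every u ∈ ℝ, lim_{λ → 0⁺} f_λ'(u) = f'(u). -/
open Filter Function Topology

section Antitone

variable {ψ : ℝ → ℝ}

theorem surjective_id_sub_of_antitone (hc : Continuous ψ) (hψ : Antitone ψ) :
    Surjective fun x => x - ψ x := by
  refine Continuous.surjective (by fun_prop) ?_ ?_
  · refine tendsto_atTop_mono' _ ?_ (tendsto_atTop_add_const_right _ (-ψ 0) tendsto_id)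
    filter_upwards [eventually_ge_atTop 0] with x hx
    simpa only [id, sub_eq_add_neg, add_le_add_iff_left, neg_le_neg_iff] using hψ hx
  · refine tendsto_atBot_mono' _ ?_ (tendsto_atBot_add_const_right _ (-ψ 0) tendsto_id)
    filter_upwards [eventually_le_atBot 0] with x hx
    simpa only [id, sub_eq_add_neg, add_le_add_iff_left, neg_le_neg_iff] using hψ hx

theorem antilipschitzWith_id_sub_of_antitone (hψ : Antitone ψ) :
    AntilipschitzWith 1 fun x => x - ψ x := by
  refine AntilipschitzWith.of_le_mul_dist fun a b => ?_
  wlog hab : a ≤ b generalizing a b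
  · simpa only [dist_comm] using this b a (le_of_not_ge hab)
  · have hψab : ψ b ≤ ψ a := hψ hab
    rw [NNReal.coe_one, one_mul, dist_comm a, dist_comm (a - ψ a), Real.dist_eq, Real.dist_eq,
      abs_of_nonneg (sub_nonneg.2 hab)]
    exact le_trans (by linarith) (le_abs_self _)

end Antitone

section Resolvent

variable {φ : ℝ → ℝ} {lam u : ℝ}

theorem rightInverse_Jlam (hc : Continuous φ) (hφ : Antitone φ) (hlam : 0 ≤ lam) :
    RightInverse (Jlam φ lam) fun u => u - lam * φ u :=
  rightInverse_invFun <|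
    surjective_id_sub_of_antitone (hc.const_mul lam) (hφ.const_mul hlam)

theorem lipschitzWith_one_Jlam (hc : Continuous φ) (hφ : Antitone φ) (hlam : 0 ≤ lam) :
    LipschitzWith 1 (Jlam φ lam) :=
  (antilipschitzWith_id_sub_of_antitone (hφ.const_mul hlam)).to_rightInverse
    (rightInverse_Jlam hc hφ hlam)

theorem dist_Jlam_self_le (hc : Continuous φ) (hφ : Antitone φ) (hlam : 0 ≤ lam) (u : ℝ) :
    dist (Jlam φ lam u) u ≤ lam * |φ u| := by
  have hinv : Jlam φ lam u - lam * φ (Jlam φ lam u) = u := rightInverse_Jlam hc hφ hlam u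
  calc dist (Jlam φ lam u) u
      ≤ dist (Jlam φ lam u - lam * φ (Jlam φ lam u)) (u - lam * φ u) := by
        simpa using
          (antilipschitzWith_id_sub_of_antitone (hφ.const_mul hlam)).le_mul_dist (Jlam φ lam u) u
    _ = lam * |φ u| := by
        rw [hinv, Real.dist_eq, sub_sub_cancel, abs_mul, abs_of_nonneg hlam]

theorem tendsto_Jlam_nhdsGT_zero (hc : Continuous φ) (hφ : Antitone φ) (u : ℝ) :
    Tendsto (fun lam => Jlam φ lam u) (𝓝[>] 0) (𝓝 u) := by
  have hbound : Tendsto (fun lam : ℝ => lam * |φ u|) (𝓝[>] 0) (𝓝 0) :=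
    (continuous_mul_const |φ u|).tendsto' 0 0 (zero_mul _) |>.mono_left nhdsWithin_le_nhds
  refine tendsto_iff_dist_tendsto_zero.2 <|
    squeeze_zero' (Eventually.of_forall fun _ => dist_nonneg) ?_ hbound
  filter_upwards [self_mem_nhdsWithin] with lam hlam
  exact dist_Jlam_self_le hc hφ (le_of_lt hlam) u

theorem one_sub_mul_deriv_pos_of_antitone (hφ : Antitone φ) (hlam : 0 ≤ lam) (x : ℝ) :
    0 < 1 - lam * deriv φ x := by
  have : lam * deriv φ x ≤ 0 := mul_nonpos_of_nonneg_of_nonpos hlam hφ.deriv_nonpos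
  linarith

theorem hasDerivAt_Jlam (hc : Continuous φ) (hφ : Antitone φ) (hlam : 0 ≤ lam)
    (hd : DifferentiableAt ℝ φ (Jlam φ lam u)) :
    HasDerivAt (Jlam φ lam) (1 - lam * deriv φ (Jlam φ lam u))⁻¹ u := by
  have hinner : HasDerivAt (fun v => v - lam * φ v) (1 - lam * deriv φ (Jlam φ lam u))
      (Jlam φ lam u) :=
    (hasDerivAt_id' _).fun_sub (hd.hasDerivAt.const_mul lam)
  exact HasDerivAt.of_local_left_inverse
    (lipschitzWith_one_Jlam hc hφ hlam).continuous.continuousAt hinner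
    (one_sub_mul_deriv_pos_of_antitone hφ hlam _).ne'
    (Eventually.of_forall (rightInverse_Jlam hc hφ hlam))

theorem hasDerivAt_yosida (hc : Continuous φ) (hφ : Antitone φ) (hlam : 0 < lam)
    (hd : DifferentiableAt ℝ φ (Jlam φ lam u)) :
    HasDerivAt (yosida φ lam)
      (deriv φ (Jlam φ lam u) / (1 - lam * deriv φ (Jlam φ lam u))) u := by
  have hpos := one_sub_mul_deriv_pos_of_antitone hφ hlam.le (Jlam φ lam u)
  refine (((hasDerivAt_Jlam hc hφ hlam.le hd).sub (hasDerivAt_id u)).div_const lam).congr_deriv ?_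
  field_simp
  ring

theorem eventually_hasDerivAt_yosida (hc : Continuous φ) (hφ : Antitone φ)
    (hd : ∀ᶠ x in 𝓝 u, DifferentiableAt ℝ φ x) :
    ∀ᶠ lam in 𝓝[>] 0, HasDerivAt (yosida φ lam)
      (deriv φ (Jlam φ lam u) / (1 - lam * deriv φ (Jlam φ lam u))) u := by
  filter_upwards [self_mem_nhdsWithin, (tendsto_Jlam_nhdsGT_zero hc hφ u).eventually hd]
    with lam hlam hdJ
  exact hasDerivAt_yosida hc hφ hlam hdJ

theorem tendsto_deriv_yosida (hc : Continuous φ) (hφ : Antitone φ)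
    (hd : ∀ᶠ x in 𝓝 u, DifferentiableAt ℝ φ x) (hd' : ContinuousAt (deriv φ) u) :
    Tendsto (fun lam => deriv (yosida φ lam) u) (𝓝[>] 0) (𝓝 (deriv φ u)) := by
  have hlam : Tendsto (fun lam : ℝ => lam) (𝓝[>] 0) (𝓝 0) :=
    tendsto_id.mono_left nhdsWithin_le_nhds
  have hderiv : Tendsto (fun lam => deriv φ (Jlam φ lam u)) (𝓝[>] 0) (𝓝 (deriv φ u)) :=
    hd'.tendsto.comp (tendsto_Jlam_nhdsGT_zero hc hφ u)
  have hlimit := hderiv.div ((hlam.mul hderiv).const_sub 1) (by simp)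
  rw [zero_mul, sub_zero, div_one] at hlimit
  exact hlimit.congr' <|
    (eventually_hasDerivAt_yosida hc hφ hd).mono fun _ h => h.deriv.symm

end Resolvent

theorem deriv_add_const_mul_id {g : ℝ → ℝ} {u : ℝ} (hg : DifferentiableAt ℝ g u) (κ : ℝ) :
    deriv (fun v => g v + κ * v) u = deriv g u + κ := by
  simpa only [mul_one] using (hg.hasDerivAt.fun_add ((hasDerivAt_id' u).const_mul κ)).deriv

theorem fYosida_deriv_tendsto_general (κ : ℝ) {φ : ℝ → ℝ} (hc : Continuous φ)
    (hφ : Antitone φ) :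
    (∀ lam : ℝ, 0 < lam → ∀ u : ℝ, DifferentiableAt ℝ φ (Jlam φ lam u) →
      DifferentiableAt ℝ (fun v => yosida φ lam v + κ * v) u) ∧
    (∀ u : ℝ, (∀ᶠ x in 𝓝 u, DifferentiableAt ℝ φ x) → ContinuousAt (deriv φ) u →
      Tendsto (fun lam => deriv (fun v => yosida φ lam v + κ * v) u)
        (𝓝[>] 0) (𝓝 (deriv (fun v => φ v + κ * v) u))) := by
  refine ⟨fun lam hlam u hd => ?_, fun u hd hd' => ?_⟩
  · exact (hasDerivAt_yosida hc hφ hlam hd).differentiableAt.add (by fun_prop)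
  · rw [deriv_add_const_mul_id hd.self_of_nhds]
    refine ((tendsto_deriv_yosida hc hφ hd hd').add_const κ).congr' ?_
    filter_upwards [eventually_hasDerivAt_yosida hc hφ hd] with lam h
    exact (deriv_add_const_mul_id h.differentiableAt κ).symm

/-- For a continuously differentiable non-increasing `φ`, each
`f_λ(u) := φ_λ(u) + κ u` (`λ > 0`) is differentiable, and
`f_λ'(u) → f'(u)` as `λ → 0⁺`, where `f(u) = φ(u) + κ u`. -/
theorem fYosida_deriv_tendsto (κ : ℝ) (φ : ℝ → ℝ) (hφ : ContDiff ℝ 1 φ)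
    (hmono : ∀ u₁ u₂ : ℝ, u₁ ≤ u₂ → φ u₂ ≤ φ u₁) :
    (∀ lam : ℝ, 0 < lam →
      Differentiable ℝ (fun u : ℝ => yosida φ lam u + κ * u)) ∧
    (∀ u : ℝ, Filter.Tendsto
      (fun lam : ℝ => deriv (fun v : ℝ => yosida φ lam v + κ * v) u)
      (nhdsWithin 0 (Set.Ioi 0)) (nhds (deriv (fun v : ℝ => φ v + κ * v) u))) := by
  have hd : Differentiable ℝ φ := hφ.differentiable one_ne_zero
  have hanti : Antitone φ := hmono
  have general := fYosida_deriv_tendsto_general κ hφ.continuous hanti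
  exact ⟨fun lam hlam u => general.1 lam hlam u (hd _),
    fun u => general.2 u (.of_forall hd) hφ.continuous_deriv_one.continuousAt⟩
end

section
/- Let d ≥ 1, T > 0, x₀ ∈ ℝ^d, κ ∈ ℝ, K > 0, ν > 0, β ∈ [0,2), and θ ∈ (0, 2/ν). There exists a constant K' = K'(T, θ, κ) > 0, independent of x₀ and depending on the nonlinearity only through κ, with the following property. Let φ : [0,T]×ℝ^d×ℝ → ℝ be continuous and satisfy: (i) φ(t,x,u₁) - φ(t,x,u₂) ≤ κ(u₁ - u₂) for all t ∈ [0,T], x ∈ ℝ^d, and u₁ > u₂; (ii) |φ(t,x,u)| ≤ K exp(K(|x - x₀|^β + |u|^ν)) for all t, x, u. If z₁, z₂ ∈ C_{θ,x₀} and w₁, w₂ ∈ C_{θ,x₀} satisfy, for i = 1,2 and all (t,x) ∈ [0,T]×ℝ^d, w_i(t,x) = ∫_0^t ∫_{ℝ^d} G(t-s, x-y) φ(s, y, w_i(s,y)) dy ds + z_i(t,x), then |w₁ - w₂|_{θ,x₀} ≤ K' |z₁ - z₂|_{θ,x₀}. -/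
open MeasureTheory

/-- The heat kernel of `(1/2)Δ` on `ℝ^d`. -/
noncomputable def heatKernel (d : ℕ) (t : ℝ) (x : EuclideanSpace ℝ (Fin d)) : ℝ :=
  (2 * Real.pi * t) ^ (-(d : ℝ) / 2) * Real.exp (-‖x‖ ^ 2 / (2 * t))

/-- The weighted supremum norm `sup_{t ∈ [0,T]} sup_x |z(t,x)|/(1+‖x-x₀‖^θ)`. -/
noncomputable def wNorm (d : ℕ) (T θ : ℝ) (x₀ : EuclideanSpace ℝ (Fin d))
    (z : ℝ → EuclideanSpace ℝ (Fin d) → ℝ) : ℝ :=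
  ⨆ (t : Set.Icc (0 : ℝ) T) (x : EuclideanSpace ℝ (Fin d)),
    |z t.1 x| / (1 + ‖x - x₀‖ ^ θ)

/-- Membership in the weighted space `C_{θ,x₀}([0,T] × ℝ^d)`: continuity on
`[0,T] × ℝ^d` together with vanishing of the weighted quotient at spatial
infinity (uniformly in `t ∈ [0,T]`). -/
def memC (d : ℕ) (T θ : ℝ) (x₀ : EuclideanSpace ℝ (Fin d))
    (z : ℝ → EuclideanSpace ℝ (Fin d) → ℝ) : Prop :=
  ContinuousOn (fun p : ℝ × EuclideanSpace ℝ (Fin d) => z p.1 p.2)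
      (Set.Icc 0 T ×ˢ Set.univ) ∧
  ∀ ε > 0, ∃ R : ℝ, ∀ x : EuclideanSpace ℝ (Fin d), R ≤ ‖x‖ →
    ∀ t ∈ Set.Icc (0 : ℝ) T, |z t x| / (1 + ‖x - x₀‖ ^ θ) < ε

/-!
Write `ρ x = 1 + ‖x - x₀‖ ^ θ` and `N = |z₁ - z₂|_{θ,x₀}`. The difference
`U = w₁ - w₂ - (z₁ - z₂)` is the Duhamel integral of `f = φ(·, w₁) - φ(·, w₂)`, and where
`N * ρ < U` we have `w₂ < w₁`, so that the one-sided Lipschitz condition gives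
`f ≤ |κ| * (U + N * ρ)`.

Compare `U` with multiples of the barrier `B = exp (l t) P_t ρ`, where `P` is the heat semigroup and
`l = 2 |κ| + 1`. If `U` exceeded `2 N B` somewhere, then, as `U = o(ρ)` at infinity, a larger
multiple of `B` would touch `U` from above at some point. Restarting the heat flow shortly before
and differentiating in time gives `l U ≤ f` there, which contradicts the bound on `f`.

By the symmetry of the Gaussian `P_t ρ` is bounded below by `ρ / 2`, and by the submultiplicativity
of translates of `ρ` it is bounded above by a multiple of `ρ`, with a constant independent of `x₀`.
-/

open ProbabilityTheory Filter Topology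

section Growth

variable {ι κ F F' : Type*} [NormedAddCommGroup F] [NormedAddCommGroup F']

/-- The family `f` grows more slowly than every Gaussian `exp (ε * ‖y‖ ^ 2)`, uniformly in its
index. This is the class of functions on which all heat integrals below converge for all times. -/
def HasSubgaussianGrowth (f : ι → F → ℝ) : Prop :=
  ∀ ε > 0, ∃ A ≥ 0, ∀ i y, |f i y| ≤ A * Real.exp (ε * ‖y‖ ^ 2)

namespace HasSubgaussianGrowth

lemma sub {f g : ι → F → ℝ} (hf : HasSubgaussianGrowth f) (hg : HasSubgaussianGrowth g) :
    HasSubgaussianGrowth fun i y => f i y - g i y := by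
  intro ε hε
  obtain ⟨A, hA, hfA⟩ := hf ε hε
  obtain ⟨B, hB, hgB⟩ := hg ε hε
  refine ⟨A + B, add_nonneg hA hB, fun i y => ?_⟩
  rw [add_mul]
  exact (abs_sub _ _).trans (add_le_add (hfA i y) (hgB i y))

lemma comp_of_norm_le {f : ι → F → ℝ} (hf : HasSubgaussianGrowth f) (σ : κ → ι)
    {h : κ → F' → F} {C : ℝ} (hh : ∀ k y, ‖h k y‖ ≤ C * (1 + ‖y‖)) :
    HasSubgaussianGrowth fun k y => f (σ k) (h k y) := by
  intro ε hε
  obtain ⟨A, hA, hfA⟩ := hf (ε / (2 * (C ^ 2 + 1))) (by positivity)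
  refine ⟨A * Real.exp ε, by positivity, fun k y => (hfA _ _).trans ?_⟩
  rw [mul_assoc, ← Real.exp_add]
  gcongr
  have hsq : ‖h k y‖ ^ 2 ≤ 2 * (C ^ 2 + 1) * (1 + ‖y‖ ^ 2) := by
    calc ‖h k y‖ ^ 2 ≤ (C * (1 + ‖y‖)) ^ 2 := by gcongr; exact hh k y
      _ ≤ 2 * (C ^ 2 + 1) * (1 + ‖y‖ ^ 2) := by
        nlinarith [mul_nonneg (sq_nonneg C) (sq_nonneg (1 - ‖y‖)), sq_nonneg ‖y‖]
  calc ε / (2 * (C ^ 2 + 1)) * ‖h k y‖ ^ 2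
      ≤ ε / (2 * (C ^ 2 + 1)) * (2 * (C ^ 2 + 1) * (1 + ‖y‖ ^ 2)) := by gcongr
    _ = ε + ε * ‖y‖ ^ 2 := by field_simp

lemma reindex {f : ι → F → ℝ} (hf : HasSubgaussianGrowth f) (σ : κ → ι) :
    HasSubgaussianGrowth fun k => f (σ k) :=
  hf.comp_of_norm_le σ (h := fun _ y => y) (C := 1) fun _ y => by linarith

lemma of_norm_sub {f : ι → F → ℝ} (x₀ : F)
    (hf : ∀ ε > 0, ∃ A ≥ 0, ∀ i y, |f i y| ≤ A * Real.exp (ε * ‖y - x₀‖ ^ 2)) :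
    HasSubgaussianGrowth f := by
  have hcentred : HasSubgaussianGrowth fun i y => f i (y + x₀) := by
    intro ε hε
    obtain ⟨A, hA, hfA⟩ := hf ε hε
    exact ⟨A, hA, fun i y => by simpa only [add_sub_cancel_right] using hfA i (y + x₀)⟩
  have hshift (_ : ι) (y : F) : ‖y - x₀‖ ≤ (1 + ‖x₀‖) * (1 + ‖y‖) := by
    nlinarith [norm_sub_le y x₀, norm_nonneg y, norm_nonneg x₀]
  simpa only [id_eq, sub_add_cancel] using
    hcentred.comp_of_norm_le id (h := fun _ y => y - x₀) hshift

lemma exists_integrable_bound [NormedSpace ℝ F] [CompleteSpace F] [SecondCountableTopology F]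
    [MeasurableSpace F] [BorelSpace F] {f : ι → F → ℝ} (hf : HasSubgaussianGrowth f)
    (μ : Measure F) [IsGaussian μ] :
    ∃ b : F → ℝ, Integrable b μ ∧ ∀ i y, |f i y| ≤ b y := by
  obtain ⟨C, hC, hint⟩ := IsGaussian.exists_integrable_exp_sq μ
  obtain ⟨A, -, hA⟩ := hf C hC
  exact ⟨_, hint.const_mul A, hA⟩

lemma integrable [NormedSpace ℝ F] [CompleteSpace F] [SecondCountableTopology F]
    [MeasurableSpace F] [BorelSpace F] {f : ι → F → ℝ} (hf : HasSubgaussianGrowth f)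
    {i : ι} (hfi : Continuous (f i)) (μ : Measure F) [IsGaussian μ] : Integrable (f i) μ := by
  obtain ⟨b, hb, hfb⟩ := hf.exists_integrable_bound μ
  exact hb.mono' hfi.aestronglyMeasurable (.of_forall (hfb i))

end HasSubgaussianGrowth

end Growth

section HeatSemigroup

variable {E : Type*} [NormedAddCommGroup E] [InnerProductSpace ℝ E]

lemma norm_add_sqrt_smul_le {R τ t : ℝ} {x : E} (hx : ‖x‖ ≤ R) (ht : t ≤ τ) (ξ : E) :
    ‖x + √t • ξ‖ ≤ (R + √τ) * (1 + ‖ξ‖) := by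
  have hR : 0 ≤ R := (norm_nonneg x).trans hx
  calc ‖x + √t • ξ‖ ≤ ‖x‖ + √t * ‖ξ‖ := by
        simpa only [norm_smul, Real.norm_of_nonneg (Real.sqrt_nonneg t)] using
          norm_add_le x (√t • ξ)
    _ ≤ R + √τ * ‖ξ‖ := by gcongr
    _ ≤ (R + √τ) * (1 + ‖ξ‖) := by nlinarith [norm_nonneg ξ, Real.sqrt_nonneg τ]

variable {ι : Type*}

lemma HasSubgaussianGrowth.shift {f : ι → E → ℝ} (hf : HasSubgaussianGrowth f) (R τ : ℝ) :
    HasSubgaussianGrowth fun (p : ι × Metric.closedBall (0 : E) R × Set.Iic τ) ξ =>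
      f p.1 (p.2.1 + √(p.2.2 : ℝ) • ξ) :=
  hf.comp_of_norm_le Prod.fst fun p ξ =>
    norm_add_sqrt_smul_le (mem_closedBall_zero_iff.1 p.2.1.2) p.2.2.2 ξ

lemma HasSubgaussianGrowth.shift_prod {f : ι → E → ℝ} (hf : HasSubgaussianGrowth f) (τ : ℝ) :
    HasSubgaussianGrowth fun (p : ι × Set.Iic τ) (q : E × E) =>
      f p.1 (q.1 + √(p.2 : ℝ) • q.2) := by
  refine hf.comp_of_norm_le Prod.fst (C := 1 + √τ) fun p q => ?_
  calc ‖q.1 + √(p.2 : ℝ) • q.2‖ ≤ ‖q.1‖ + √(p.2 : ℝ) * ‖q.2‖ := by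
        simpa only [norm_smul, Real.norm_of_nonneg (Real.sqrt_nonneg _)] using
          norm_add_le q.1 (√(p.2 : ℝ) • q.2)
    _ ≤ ‖q‖ + √τ * ‖q‖ := by
        gcongr
        exacts [norm_fst_le q, p.2.2, norm_snd_le q]
    _ ≤ (1 + √τ) * (1 + ‖q‖) := by nlinarith [Real.sqrt_nonneg τ]

variable [FiniteDimensional ℝ E] [MeasurableSpace E]

/-- The heat semigroup `exp (t Δ / 2)` as a Gaussian average. For `t ≤ 0` it is the identity. -/
noncomputable def heatSemigroup (t : ℝ) (g : E → ℝ) (x : E) : ℝ :=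
  ∫ ξ, g (x + √t • ξ) ∂stdGaussian E

lemma heatSemigroup_translate (t : ℝ) (g : E → ℝ) (x y : E) :
    heatSemigroup t (fun v => g (x + v)) y = heatSemigroup t g (x + y) := by
  simp only [heatSemigroup, add_assoc]

variable [BorelSpace E]

@[simp]
lemma heatSemigroup_zero (g : E → ℝ) (x : E) : heatSemigroup 0 g x = g x := by
  simp [heatSemigroup]

lemma hasSubgaussianGrowth_heatSemigroup {f : ι → E → ℝ} (hf : HasSubgaussianGrowth f) (τ : ℝ) :
    HasSubgaussianGrowth fun (p : ι × Set.Iic τ) x => heatSemigroup (p.2 : ℝ) (f p.1) x := by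
  intro ε hε
  obtain ⟨C, hC, hint⟩ := IsGaussian.exists_integrable_exp_sq (stdGaussian E)
  obtain ⟨A, hA, hfA⟩ := hf.shift_prod τ (min ε C) (lt_min hε hC)
  refine ⟨A * ∫ ξ, Real.exp (C * ‖ξ‖ ^ 2) ∂stdGaussian E, by positivity, fun p x => ?_⟩
  have hbound (ξ : E) : |f p.1 (x + √(p.2 : ℝ) • ξ)| ≤
      A * Real.exp (ε * ‖x‖ ^ 2) * Real.exp (C * ‖ξ‖ ^ 2) := by
    refine (hfA p (x, ξ)).trans ?_
    rw [mul_assoc, ← Real.exp_add]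
    gcongr
    rcases max_cases ‖x‖ ‖ξ‖ with ⟨h, -⟩ | ⟨h, -⟩ <;> simp only [Prod.norm_mk, h]
    · nlinarith [min_le_left ε C, sq_nonneg ‖x‖, mul_nonneg hC.le (sq_nonneg ‖ξ‖)]
    · nlinarith [min_le_right ε C, sq_nonneg ‖ξ‖, mul_nonneg hε.le (sq_nonneg ‖x‖)]
  calc |heatSemigroup (p.2 : ℝ) (f p.1) x|
      ≤ ∫ ξ, A * Real.exp (ε * ‖x‖ ^ 2) * Real.exp (C * ‖ξ‖ ^ 2) ∂stdGaussian E :=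
        norm_integral_le_of_norm_le (f := fun ξ => f p.1 (x + √(p.2 : ℝ) • ξ)) (hint.const_mul _)
          (.of_forall hbound)
    _ = A * (∫ ξ, Real.exp (C * ‖ξ‖ ^ 2) ∂stdGaussian E) * Real.exp (ε * ‖x‖ ^ 2) := by
        rw [integral_const_mul]; ring

lemma HasSubgaussianGrowth.integrable_shift {f : ι → E → ℝ} (hf : HasSubgaussianGrowth f) {i : ι}
    (hfi : Continuous (f i)) (t : ℝ) (x : E) :
    Integrable (fun ξ => f i (x + √t • ξ)) (stdGaussian E) :=
  (hf.shift ‖x‖ t).integrable (i := (i, ⟨x, by simp⟩, ⟨t, Set.self_mem_Iic⟩)) (by fun_prop) _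

lemma continuous_heatSemigroup {X : Type*} [TopologicalSpace X] [FirstCountableTopology X]
    {f : X → E → ℝ} (hf : HasSubgaussianGrowth f) (hfc : Continuous fun p : X × E => f p.1 p.2) :
    Continuous fun p : X × ℝ × E => heatSemigroup p.2.1 (f p.1) p.2.2 := by
  rw [continuous_iff_continuousAt]
  rintro ⟨k₀, t₀, x₀⟩
  obtain ⟨b, hb, hfb⟩ :=
    (hf.shift (‖x₀‖ + 1) (t₀ + 1)).exists_integrable_bound (stdGaussian E)
  have hnhds : ∀ᶠ p : X × ℝ × E in 𝓝 (k₀, t₀, x₀), p.2.1 ≤ t₀ + 1 ∧ ‖p.2.2‖ ≤ ‖x₀‖ + 1 := by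
    have ht : Tendsto (fun p : X × ℝ × E => p.2.1) (𝓝 (k₀, t₀, x₀)) (𝓝 t₀) :=
      Continuous.tendsto (by fun_prop) (k₀, t₀, x₀)
    have hx : Tendsto (fun p : X × ℝ × E => ‖p.2.2‖) (𝓝 (k₀, t₀, x₀)) (𝓝 ‖x₀‖) :=
      Continuous.tendsto (by fun_prop) (k₀, t₀, x₀)
    exact (ht.eventually_le_const (lt_add_one t₀)).and (hx.eventually_le_const (lt_add_one ‖x₀‖))
  refine continuousAt_of_dominated (bound := b) (.of_forall fun p => ?_) ?_ hb
    (.of_forall fun ξ => ?_)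
  · exact (show Continuous _ by fun_prop).aestronglyMeasurable
  · filter_upwards [hnhds] with p hp
    exact .of_forall fun ξ =>
      hfb (p.1, ⟨p.2.2, mem_closedBall_zero_iff.2 hp.2⟩, ⟨p.2.1, hp.1⟩) ξ
  · exact (show Continuous fun p : X × ℝ × E => f p.1 (p.2.2 + √p.2.1 • ξ) by
      fun_prop).continuousAt

lemma HasSubgaussianGrowth.continuous_heatSemigroup_apply {f : ι → E → ℝ}
    (hf : HasSubgaussianGrowth f) {i : ι} (hfi : Continuous (f i)) :
    Continuous fun p : ℝ × E => heatSemigroup p.1 (f i) p.2 :=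
  (continuous_heatSemigroup (hf.reindex fun _ : Unit => i) (by fun_prop)).comp
    (by fun_prop : Continuous fun p : ℝ × E => ((), p))

instance isNegInvariant_stdGaussian : (stdGaussian E).IsNegInvariant :=
  ⟨stdGaussian_map (LinearIsometryEquiv.neg ℝ)⟩

lemma integral_sub_sqrt_smul_stdGaussian (t : ℝ) (g : E → ℝ) (x : E) :
    ∫ ξ, g (x - √t • ξ) ∂stdGaussian E = heatSemigroup t g x := by
  rw [← integral_neg_eq_self]
  simp only [heatSemigroup, smul_neg, sub_neg_eq_add]

/-- Weak midpoint convexity survives averaging because the Gaussian is symmetric. -/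
lemma le_two_mul_heatSemigroup {f : ι → E → ℝ} (hf : HasSubgaussianGrowth f) {i : ι}
    (hfi : Continuous (f i)) (hmid : ∀ x v, f i x ≤ f i (x + v) + f i (x - v)) (t : ℝ) (x : E) :
    f i x ≤ 2 * heatSemigroup t (f i) x := by
  have hadd := hf.integrable_shift hfi t x
  have hsub : Integrable (fun ξ => f i (x - √t • ξ)) (stdGaussian E) := by
    simpa only [smul_neg, ← sub_eq_add_neg] using hadd.comp_neg
  calc f i x = ∫ _, f i x ∂stdGaussian E := by rw [integral_const, probReal_univ, one_smul]
    _ ≤ ∫ ξ, f i (x + √t • ξ) + f i (x - √t • ξ) ∂stdGaussian E :=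
        integral_mono (integrable_const _) (hadd.add hsub) fun ξ => hmid x _
    _ = 2 * heatSemigroup t (f i) x := by
        rw [integral_add hadd hsub, integral_sub_sqrt_smul_stdGaussian, two_mul, heatSemigroup]

end HeatSemigroup

section HeatMeasure

variable (E : Type*) [NormedAddCommGroup E] [InnerProductSpace ℝ E] [FiniteDimensional ℝ E]
  [MeasurableSpace E] [BorelSpace E]

/-- The centred Gaussian measure of covariance `t`, i.e. the law at time `t` of a Brownian motion
issued from the origin. -/
noncomputable def heatMeasure (t : ℝ) : Measure E := (stdGaussian E).map (√t • ·)

instance isProbabilityMeasure_heatMeasure (t : ℝ) : IsProbabilityMeasure (heatMeasure E t) :=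
  Measure.isProbabilityMeasure_map (by fun_prop)

variable {E}

lemma charFun_heatMeasure {t : ℝ} (ht : 0 ≤ t) (ξ : E) :
    charFun (heatMeasure E t) ξ = Complex.exp (-(t * ‖ξ‖ ^ 2 / 2 : ℝ)) := by
  rw [heatMeasure, charFun_map_smul, charFun_stdGaussian, norm_smul,
    Real.norm_of_nonneg (Real.sqrt_nonneg t)]
  congr 1
  norm_cast
  rw [mul_pow, Real.sq_sqrt ht, neg_div]

lemma heatMeasure_conv {s t : ℝ} (hs : 0 ≤ s) (ht : 0 ≤ t) :
    heatMeasure E s ∗ heatMeasure E t = heatMeasure E (s + t) := by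
  refine Measure.ext_of_charFun (funext fun ξ => ?_)
  rw [charFun_conv, charFun_heatMeasure hs, charFun_heatMeasure ht,
    charFun_heatMeasure (add_nonneg hs ht), ← Complex.exp_add]
  congr 1
  push_cast
  ring

lemma integral_heatMeasure {g : E → ℝ} (hg : Continuous g) (t : ℝ) :
    ∫ y, g y ∂heatMeasure E t = heatSemigroup t g 0 := by
  simp only [heatMeasure, heatSemigroup, zero_add]
  exact integral_map (by fun_prop) hg.aestronglyMeasurable

lemma heatSemigroup_heatSemigroup {ι : Type*} {f : ι → E → ℝ} (hf : HasSubgaussianGrowth f) {i : ι}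
    (hfi : Continuous (f i)) {s t : ℝ} (hs : 0 ≤ s) (ht : 0 ≤ t) (x : E) :
    heatSemigroup s (heatSemigroup t (f i)) x = heatSemigroup (s + t) (f i) x := by
  set g : E → ℝ := fun y => f i (x + y) with hg
  have hgc : Continuous g := by fun_prop
  have hint : Integrable g (heatMeasure E (s + t)) :=
    (integrable_map_measure hgc.aestronglyMeasurable (by fun_prop)).2
      (hf.integrable_shift hfi (s + t) x)
  symm
  calc heatSemigroup (s + t) (f i) x = ∫ y, g y ∂(heatMeasure E s ∗ heatMeasure E t) := by
        rw [heatMeasure_conv hs ht, integral_heatMeasure hgc, hg, heatSemigroup_translate, add_zero]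
    _ = ∫ y, ∫ z, g (y + z) ∂heatMeasure E t ∂heatMeasure E s := by
        rw [integral_conv (by rwa [heatMeasure_conv hs ht])]
    _ = ∫ y, heatSemigroup t (f i) (x + y) ∂heatMeasure E s := by
        congr with y
        rw [integral_heatMeasure (by fun_prop)]
        simp only [hg, ← add_assoc, heatSemigroup_translate, add_zero]
    _ = heatSemigroup s (heatSemigroup t (f i)) x := by
        have hcont : Continuous (heatSemigroup t (f i)) :=
          (hf.continuous_heatSemigroup_apply hfi).comp (by fun_prop : Continuous fun y => (t, y))
        rw [integral_heatMeasure (by fun_prop), heatSemigroup_translate, add_zero]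

end HeatMeasure

section HeatKernel

variable {d : ℕ}

lemma heatKernel_nonneg {t : ℝ} (ht : 0 ≤ t) (x : EuclideanSpace ℝ (Fin d)) :
    0 ≤ heatKernel d t x := by
  unfold heatKernel; positivity

lemma continuous_heatKernel (t : ℝ) : Continuous (heatKernel d t) := by
  unfold heatKernel; fun_prop

lemma heatKernel_neg (t : ℝ) (x : EuclideanSpace ℝ (Fin d)) :
    heatKernel d t (-x) = heatKernel d t x := by
  simp only [heatKernel, norm_neg]

lemma heatKernel_mul_cexp_inner {t : ℝ} (ξ y : EuclideanSpace ℝ (Fin d)) :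
    heatKernel d t y • Complex.exp (inner ℝ y ξ * Complex.I) =
      ((2 * Real.pi * t) ^ (-(d : ℝ) / 2) : ℝ) *
        Complex.exp (-(1 / (2 * t) : ℂ) * ‖y‖ ^ 2 + Complex.I * inner ℝ ξ y) := by
  rw [heatKernel, Complex.real_smul, Complex.ofReal_mul, mul_assoc, Complex.ofReal_exp,
    ← Complex.exp_add, real_inner_comm]
  congr 2
  push_cast
  ring

lemma integral_heatKernel_smul_cexp_inner {t : ℝ} (ht : 0 < t) (ξ : EuclideanSpace ℝ (Fin d)) :
    ∫ y, heatKernel d t y • Complex.exp (inner ℝ y ξ * Complex.I) =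
      Complex.exp (-(t * ‖ξ‖ ^ 2 / 2 : ℝ)) := by
  have hb : 0 < (1 / (2 * t) : ℂ).re := by
    norm_cast; positivity
  have hnorm : (((2 * Real.pi * t) ^ (-(d : ℝ) / 2) : ℝ) : ℂ) *
      (Real.pi / (1 / (2 * t))) ^ (d / 2 : ℂ) = 1 := by
    rw [show (Real.pi / (1 / (2 * t)) : ℂ) = (2 * Real.pi * t : ℝ) by push_cast; field_simp,
      show (d / 2 : ℂ) = (d / 2 : ℝ) by push_cast; ring, ← Complex.ofReal_cpow (by positivity),
      ← Complex.ofReal_mul, ← Real.rpow_add (by positivity), neg_div, neg_add_cancel,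
      Real.rpow_zero, Complex.ofReal_one]
  simp_rw [heatKernel_mul_cexp_inner]
  rw [integral_const_mul, GaussianFourier.integral_cexp_neg_mul_sq_norm_add hb,
    finrank_euclideanSpace_fin, ← mul_assoc, hnorm, one_mul]
  congr 1
  have : (t : ℂ) ≠ 0 := by exact_mod_cast ht.ne'
  push_cast
  rw [Complex.I_sq]
  field_simp
  norm_num

lemma integrable_heatKernel {t : ℝ} (ht : 0 < t) : Integrable (heatKernel d t) := by
  have hb : 0 < (1 / (2 * t) : ℂ).re := by
    norm_cast; positivity
  refine Integrable.const_mul (Integrable.congr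
    (GaussianFourier.integrable_cexp_neg_mul_sq_norm_add hb 0
      (0 : EuclideanSpace ℝ (Fin d))).re (.of_forall fun y => ?_)) _
  simp only [zero_mul, add_zero]
  norm_cast
  change Real.exp _ = Real.exp _
  congr 1
  ring

lemma heatMeasure_eq_withDensity {t : ℝ} (ht : 0 < t) :
    heatMeasure (EuclideanSpace ℝ (Fin d)) t =
      volume.withDensity fun y => ENNReal.ofReal (heatKernel d t y) := by
  have := isFiniteMeasure_withDensity_ofReal (integrable_heatKernel (d := d) ht).2
  refine Measure.ext_of_charFun (funext fun ξ => ?_)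
  rw [charFun_heatMeasure ht.le, ← integral_heatKernel_smul_cexp_inner ht, charFun_apply,
    integral_withDensity_eq_integral_toReal_smul
      (continuous_heatKernel t).measurable.ennreal_ofReal
      (.of_forall fun _ => ENNReal.ofReal_lt_top)]
  simp only [ENNReal.toReal_ofReal (heatKernel_nonneg ht.le _)]

lemma integral_heatKernel_sub_mul {t : ℝ} (ht : 0 < t) {g : EuclideanSpace ℝ (Fin d) → ℝ}
    (hg : Continuous g) (x : EuclideanSpace ℝ (Fin d)) :
    ∫ y, heatKernel d t (x - y) * g y = heatSemigroup t g x := by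
  calc ∫ y, heatKernel d t (x - y) * g y = ∫ y, heatKernel d t y * g (x + y) := by
        rw [← integral_add_left_eq_self _ x]
        simp only [sub_add_cancel_left, heatKernel_neg]
    _ = ∫ y, g (x + y) ∂heatMeasure (EuclideanSpace ℝ (Fin d)) t := by
        rw [heatMeasure_eq_withDensity ht, integral_withDensity_eq_integral_toReal_smul
          (continuous_heatKernel t).measurable.ennreal_ofReal
          (.of_forall fun _ => ENNReal.ofReal_lt_top)]
        simp only [ENNReal.toReal_ofReal (heatKernel_nonneg ht.le _), smul_eq_mul]
    _ = heatSemigroup t g x := by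
        rw [integral_heatMeasure (by fun_prop), heatSemigroup_translate, add_zero]

end HeatKernel

lemma mul_le_of_le_exp_mul_add_integral {F : ℝ → ℝ} (hF : Continuous F) {l t u : ℝ} (ht : 0 < t)
    (hu : ∀ s ∈ Set.Icc 0 t, u ≤ Real.exp (l * (s - t)) * u + ∫ r in s..t, F r) :
    l * u ≤ F t := by
  set H : ℝ → ℝ := fun s => Real.exp (l * (s - t)) * u + ∫ r in s..t, F r with hH
  have hHt : H t = u := by
    simp only [hH, sub_self, mul_zero, Real.exp_zero, one_mul, intervalIntegral.integral_same,
      add_zero]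
  have hderiv : HasDerivAt H (l * u - F t) t := by
    have hexp : HasDerivAt (fun s => Real.exp (l * (s - t)) * u) (l * u) t := by
      simpa using ((((hasDerivAt_id t).sub_const t).const_mul l).exp).mul_const u
    have hint : HasDerivAt (fun s => ∫ r in s..t, F r) (-F t) t :=
      intervalIntegral.integral_hasDerivAt_left (hF.intervalIntegrable _ _)
        (hF.stronglyMeasurableAtFilter _ _) hF.continuousAt
    exact hexp.add hint
  have hslope : Tendsto (slope H t) (𝓝[<] t) (𝓝 (l * u - F t)) :=
    (hasDerivWithinAt_iff_tendsto_slope' Set.self_notMem_Iio).1 hderiv.hasDerivWithinAt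
  have hnonpos : ∀ᶠ s in 𝓝[<] t, slope H t s ≤ 0 := by
    filter_upwards [Ioo_mem_nhdsLT ht] with s hs
    rw [slope_def_field, hHt]
    exact div_nonpos_of_nonneg_of_nonpos (sub_nonneg.2 (hu s ⟨hs.1.le, hs.2.le⟩))
      (sub_nonpos.2 hs.2.le)
  exact sub_nonpos.1 (le_of_tendsto hslope hnonpos)

section Duhamel

variable {E : Type*} [NormedAddCommGroup E] [InnerProductSpace ℝ E] [FiniteDimensional ℝ E]
  [MeasurableSpace E]

/-- Duhamel's integral: the solution of `∂ₜ U = ΔU / 2 + f` that vanishes at time `0`. -/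
noncomputable def duhamel (f : ℝ → E → ℝ) (t : ℝ) (x : E) : ℝ :=
  ∫ s in (0 : ℝ)..t, heatSemigroup (t - s) (f s) x

@[simp]
lemma duhamel_zero (f : ℝ → E → ℝ) (x : E) : duhamel f 0 x = 0 :=
  intervalIntegral.integral_same

variable [BorelSpace E] {f g : ℝ → E → ℝ}

lemma continuous_heatSemigroup_sub (hf : HasSubgaussianGrowth f)
    (hfc : Continuous fun p : ℝ × E => f p.1 p.2) :
    Continuous fun p : ℝ × E × ℝ => heatSemigroup (p.1 - p.2.2) (f p.2.2) p.2.1 :=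
  (continuous_heatSemigroup hf hfc).comp
    (by fun_prop : Continuous fun p : ℝ × E × ℝ => (p.2.2, p.1 - p.2.2, p.2.1))

lemma intervalIntegrable_heatSemigroup_sub (hf : HasSubgaussianGrowth f)
    (hfc : Continuous fun p : ℝ × E => f p.1 p.2) (t : ℝ) (x : E) (a b : ℝ) :
    IntervalIntegrable (fun s => heatSemigroup (t - s) (f s) x) volume a b :=
  ((continuous_heatSemigroup_sub hf hfc).comp
    (by fun_prop : Continuous fun s => (t, x, s))).intervalIntegrable a b

lemma continuous_duhamel (hf : HasSubgaussianGrowth f)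
    (hfc : Continuous fun p : ℝ × E => f p.1 p.2) :
    Continuous fun p : ℝ × E => duhamel f p.1 p.2 :=
  intervalIntegral.continuous_parametric_intervalIntegral_of_continuous
    (f := fun (p : ℝ × E) s => heatSemigroup (p.1 - s) (f s) p.2)
    ((continuous_heatSemigroup_sub hf hfc).comp
      (by fun_prop : Continuous fun q : (ℝ × E) × ℝ => (q.1.1, q.1.2, q.2))) continuous_fst

lemma duhamel_sub (hf : HasSubgaussianGrowth f) (hfc : Continuous fun p : ℝ × E => f p.1 p.2)
    (hg : HasSubgaussianGrowth g) (hgc : Continuous fun p : ℝ × E => g p.1 p.2) (t : ℝ) (x : E) :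
    duhamel (fun s y => f s y - g s y) t x = duhamel f t x - duhamel g t x := by
  rw [duhamel, duhamel, duhamel, ← intervalIntegral.integral_sub
    (intervalIntegrable_heatSemigroup_sub hf hfc t x 0 t)
    (intervalIntegrable_heatSemigroup_sub hg hgc t x 0 t)]
  congr with s
  exact integral_sub (hf.integrable_shift (i := s) (by fun_prop) _ x)
    (hg.integrable_shift (i := s) (by fun_prop) _ x)

lemma hasSubgaussianGrowth_duhamel (hf : HasSubgaussianGrowth f) (τ : ℝ) :
    HasSubgaussianGrowth fun t : Set.Icc 0 τ => duhamel f t := by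
  intro ε hε
  obtain ⟨A, hA, hbound⟩ := hasSubgaussianGrowth_heatSemigroup hf τ ε hε
  refine ⟨A * max τ 0, by positivity, fun ⟨t, ht⟩ x => ?_⟩
  calc |duhamel f t x| ≤ A * Real.exp (ε * ‖x‖ ^ 2) * |t - 0| := by
        refine intervalIntegral.norm_integral_le_of_norm_le_const
          (f := fun s => heatSemigroup (t - s) (f s) x) fun s hs => ?_
        rw [Set.uIoc_of_le ht.1] at hs
        exact hbound (s, ⟨t - s, (sub_le_self t hs.1.le).trans ht.2⟩) x
    _ ≤ A * Real.exp (ε * ‖x‖ ^ 2) * max τ 0 := by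
        rw [sub_zero, abs_of_nonneg ht.1]
        gcongr
        exact ht.2.trans (le_max_left τ 0)
    _ = A * max τ 0 * Real.exp (ε * ‖x‖ ^ 2) := by ring

lemma integral_heatSemigroup_heatSemigroup_comm (hf : HasSubgaussianGrowth f)
    (hfc : Continuous fun p : ℝ × E => f p.1 p.2) {s : ℝ} (hs : 0 ≤ s) (a : ℝ) (x : E) :
    ∫ r in (0 : ℝ)..s, heatSemigroup a (heatSemigroup (s - r) (f r)) x =
      heatSemigroup a (duhamel f s) x := by
  obtain ⟨b, hb, hbound⟩ := ((hasSubgaussianGrowth_heatSemigroup hf s).shift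
    ‖x‖ a).exists_integrable_bound (stdGaussian E)
  refine intervalIntegral_integral_swap
    (f := fun r ξ => heatSemigroup (s - r) (f r) (x + √a • ξ)) ?_
  have : IsFiniteMeasure (volume.restrict (Set.uIoc 0 s)) := ⟨by simp⟩
  refine (hb.comp_snd _).mono' ?_ ?_
  · exact ((continuous_heatSemigroup_sub hf hfc).comp
      (by fun_prop : Continuous fun q : ℝ × E => (s, x + √a • q.2, q.1))).aestronglyMeasurable
  · filter_upwards [Measure.quasiMeasurePreserving_fst.ae
      (ae_restrict_mem measurableSet_uIoc)] with q hq
    rw [Set.uIoc_of_le hs] at hq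
    exact hbound ((q.1, ⟨s - q.1, sub_le_self s hq.1.le⟩), ⟨x, by simp⟩, ⟨a, Set.self_mem_Iic⟩) q.2

lemma duhamel_eq_heatSemigroup_duhamel_add (hf : HasSubgaussianGrowth f)
    (hfc : Continuous fun p : ℝ × E => f p.1 p.2) {s t : ℝ} (hs : 0 ≤ s) (hst : s ≤ t) (x : E) :
    duhamel f t x = heatSemigroup (t - s) (duhamel f s) x +
      ∫ r in s..t, heatSemigroup (t - r) (f r) x := by
  have hint := intervalIntegrable_heatSemigroup_sub hf hfc t x
  rw [duhamel, ← intervalIntegral.integral_add_adjacent_intervals (hint 0 s) (hint s t),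
    ← integral_heatSemigroup_heatSemigroup_comm hf hfc hs]
  congr 1
  refine intervalIntegral.integral_congr fun r hr => ?_
  rw [Set.uIcc_of_le hs] at hr
  simp only [heatSemigroup_heatSemigroup hf (i := r) (by fun_prop) (sub_nonneg.2 hst)
    (sub_nonneg.2 hr.2), sub_add_sub_cancel]

lemma heatSemigroup_duhamel_le (hf : HasSubgaussianGrowth f)
    (hfc : Continuous fun p : ℝ × E => f p.1 p.2) {ρ : E → ℝ}
    (hρ : HasSubgaussianGrowth fun _ : Unit => ρ) (hρc : Continuous ρ) {B s t : ℝ} (hs : 0 ≤ s)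
    (hst : s ≤ t) (hle : ∀ y, duhamel f s y ≤ B * heatSemigroup s ρ y) (x : E) :
    heatSemigroup (t - s) (duhamel f s) x ≤ B * heatSemigroup t ρ x := by
  have hρs : Integrable (fun ξ => heatSemigroup s ρ (x + √(t - s) • ξ)) (stdGaussian E) :=
    (hasSubgaussianGrowth_heatSemigroup hρ s).integrable_shift (i := ((), ⟨s, Set.self_mem_Iic⟩))
      ((hρ.continuous_heatSemigroup_apply (i := ()) hρc).comp (.prodMk_right s)) _ _
  have hUs : Integrable (fun ξ => duhamel f s (x + √(t - s) • ξ)) (stdGaussian E) :=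
    (hasSubgaussianGrowth_duhamel hf t).integrable_shift (i := ⟨s, hs, hst⟩)
      ((continuous_duhamel hf hfc).comp (.prodMk_right s)) _ _
  calc heatSemigroup (t - s) (duhamel f s) x
      ≤ ∫ ξ, B * heatSemigroup s ρ (x + √(t - s) • ξ) ∂stdGaussian E :=
        integral_mono hUs (hρs.const_mul B) fun ξ => hle _
    _ = B * heatSemigroup (t - s) (heatSemigroup s ρ) x := integral_const_mul _ _
    _ = B * heatSemigroup t ρ x := by
        rw [heatSemigroup_heatSemigroup hρ (i := ()) hρc (sub_nonneg.2 hst) hs, sub_add_cancel]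

/-- The barrier `exp (l t) P_t ρ`, the solution of `∂ₜ B = ΔB / 2 + l B` with initial value `ρ`. -/
noncomputable def heatBarrier (l : ℝ) (ρ : E → ℝ) (t : ℝ) (x : E) : ℝ :=
  Real.exp (l * t) * heatSemigroup t ρ x

/-- Restart the heat flow at times `s < t` and differentiate at `s = t` from the left, so that no
differentiability in space is needed. -/
lemma mul_duhamel_le_of_touches_barrier (hf : HasSubgaussianGrowth f)
    (hfc : Continuous fun p : ℝ × E => f p.1 p.2) {ρ : E → ℝ}
    (hρ : HasSubgaussianGrowth fun _ : Unit => ρ) (hρc : Continuous ρ) {l M t : ℝ} (ht : 0 < t)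
    {x : E}
    (hle : ∀ s ∈ Set.Icc 0 t, ∀ y, duhamel f s y ≤ M * heatBarrier l ρ s y)
    (heq : duhamel f t x = M * heatBarrier l ρ t x) :
    l * duhamel f t x ≤ f t x := by
  have hcont : Continuous fun r => heatSemigroup (t - r) (f r) x :=
    (continuous_heatSemigroup_sub hf hfc).comp (by fun_prop : Continuous fun r => (t, x, r))
  have hflow (s : ℝ) (hs : s ∈ Set.Icc 0 t) :
      heatSemigroup (t - s) (duhamel f s) x ≤ Real.exp (l * (s - t)) * duhamel f t x := by
    refine (heatSemigroup_duhamel_le hf hfc hρ hρc (B := M * Real.exp (l * s)) hs.1 hs.2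
      (fun y => (hle s hs y).trans_eq (mul_assoc _ _ _).symm) x).trans_eq ?_
    rw [heq, heatBarrier, show l * s = l * (s - t) + l * t by ring, Real.exp_add]
    ring
  have hcalc : l * duhamel f t x ≤ heatSemigroup (t - t) (f t) x :=
    mul_le_of_le_exp_mul_add_integral hcont ht fun s hs =>
      (duhamel_eq_heatSemigroup_duhamel_add hf hfc hs.1 hs.2 x).trans_le
        (add_le_add_left (hflow s hs) _)
  rwa [sub_self, heatSemigroup_zero] at hcalc

end Duhamel

lemma exists_touching_multiple {X : Type*} [TopologicalSpace X] {U B ρ : X → ℝ} {s : Set X}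
    (hs : IsClosed s) (hU : ContinuousOn U s) (hB : ContinuousOn B s) {C : ℝ}
    (hρpos : ∀ p ∈ s, 0 < ρ p) (hBpos : ∀ p ∈ s, 0 < B p) (hρB : ∀ p ∈ s, ρ p ≤ C * B p)
    (hdecay : Tendsto (fun p => U p / ρ p) (cocompact X ⊓ 𝓟 s) (𝓝 0)) {c : ℝ} (hc : 0 ≤ c)
    {p : X} (hp : p ∈ s) (hlt : c * B p < U p) :
    ∃ q ∈ s, ∃ M > c, U q = M * B q ∧ ∀ r ∈ s, U r ≤ M * B r := by
  have hs_mem : ∀ᶠ r in cocompact X ⊓ 𝓟 s, r ∈ s := mem_inf_of_right (mem_principal_self s)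
  have hdecayB : Tendsto (fun r => U r / B r) (cocompact X ⊓ 𝓟 s) (𝓝 0) := by
    refine (bdd_le_mul_tendsto_zero (f := fun r => ρ r / B r) (b := 0) (B := C) ?_ ?_
      hdecay).congr' ?_ <;> filter_upwards [hs_mem] with r hr
    · exact (div_pos (hρpos r hr) (hBpos r hr)).le
    · exact (div_le_iff₀ (hBpos r hr)).2 (hρB r hr)
    · exact div_mul_div_cancel₀' (hρpos r hr).ne' _ _
  have hpc : c < U p / B p := (lt_div_iff₀ (hBpos p hp)).2 hlt
  obtain ⟨q, hq, hmax⟩ := (hU.div hB fun r hr => (hBpos r hr).ne').exists_isMaxOn' hs hp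
    (hdecayB.eventually_le_const (hc.trans_lt hpc))
  refine ⟨q, hq, U q / B q, hpc.trans_le (hmax hp), ?_, fun r hr => ?_⟩
  · rw [div_mul_cancel₀ _ (hBpos q hq).ne']
  · exact (div_le_iff₀ (hBpos r hr)).1 (hmax hr)

section Comparison

variable {E : Type*} [NormedAddCommGroup E] [InnerProductSpace ℝ E] [FiniteDimensional ℝ E]
  [MeasurableSpace E] [BorelSpace E]

/-- The spatial weights `ρ` against which solutions are compared. The last field is a weak form of
midpoint convexity; it makes `P_t ρ` comparable with `ρ` from below. -/
structure IsComparisonWeight (ρ : E → ℝ) : Prop where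
  continuous : Continuous ρ
  growth : HasSubgaussianGrowth fun _ : Unit => ρ
  pos : ∀ x, 0 < ρ x
  le_add : ∀ x v, ρ x ≤ ρ (x + v) + ρ (x - v)

namespace IsComparisonWeight

variable {ρ : E → ℝ}

lemma continuous_heatBarrier (hρ : IsComparisonWeight ρ) (l : ℝ) :
    Continuous fun p : ℝ × E => heatBarrier l ρ p.1 p.2 :=
  (by fun_prop : Continuous fun p : ℝ × E => Real.exp (l * p.1)).mul
    (hρ.growth.continuous_heatSemigroup_apply (i := ()) hρ.continuous)

lemma le_two_mul_heatBarrier (hρ : IsComparisonWeight ρ) {l t : ℝ} (hl : 0 ≤ l) (ht : 0 ≤ t)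
    (x : E) : ρ x ≤ 2 * heatBarrier l ρ t x := by
  have hheat : ρ x ≤ 2 * heatSemigroup t ρ x :=
    le_two_mul_heatSemigroup hρ.growth (i := ()) hρ.continuous hρ.le_add t x
  have hexp : 1 ≤ Real.exp (l * t) := Real.one_le_exp (mul_nonneg hl ht)
  exact hheat.trans (by rw [heatBarrier]; nlinarith [hρ.pos x])

end IsComparisonWeight

theorem duhamel_le_of_source_le {f : ℝ → E → ℝ} (hf : HasSubgaussianGrowth f)
    (hfc : Continuous fun p : ℝ × E => f p.1 p.2) {ρ : E → ℝ} (hρ : IsComparisonWeight ρ)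
    {κ N T : ℝ} (hκ : 0 ≤ κ) (hN : 0 ≤ N)
    (hsource : ∀ t ∈ Set.Icc 0 T, ∀ x, N * ρ x < duhamel f t x →
      f t x ≤ κ * (duhamel f t x + N * ρ x))
    (hdecay : Tendsto (fun p : ℝ × E => duhamel f p.1 p.2 / ρ p.2)
      (cocompact (ℝ × E) ⊓ 𝓟 (Set.Icc 0 T ×ˢ Set.univ)) (𝓝 0))
    {t : ℝ} (ht : t ∈ Set.Icc 0 T) (x : E) :
    duhamel f t x ≤ 2 * N * heatBarrier (2 * κ + 1) ρ t x := by
  set l := 2 * κ + 1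
  have hl0 : 0 ≤ l := by positivity
  have hB {p : ℝ × E} (hp : p ∈ Set.Icc 0 T ×ˢ Set.univ) : ρ p.2 ≤ 2 * heatBarrier l ρ p.1 p.2 :=
    hρ.le_two_mul_heatBarrier hl0 hp.1.1 p.2
  have hBpos {p : ℝ × E} (hp : p ∈ Set.Icc 0 T ×ˢ Set.univ) : 0 < heatBarrier l ρ p.1 p.2 := by
    linarith [hB hp, hρ.pos p.2]
  by_contra! hlt
  obtain ⟨⟨s, y⟩, hsy, M, hM, heq, hle⟩ := exists_touching_multiple
    (isClosed_Icc.prod isClosed_univ) (continuous_duhamel hf hfc).continuousOn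
    (hρ.continuous_heatBarrier l).continuousOn
    (fun q _ => hρ.pos q.2) (fun _ => hBpos) (fun _ => hB) hdecay (mul_nonneg zero_le_two hN)
    (p := (t, x)) ⟨ht, Set.mem_univ x⟩ hlt
  have hUs : N * ρ y < duhamel f s y :=
    calc N * ρ y ≤ N * (2 * heatBarrier l ρ s y) := by gcongr; exact hB hsy
      _ = 2 * N * heatBarrier l ρ s y := by ring
      _ < M * heatBarrier l ρ s y := mul_lt_mul_of_pos_right hM (hBpos hsy)
      _ = duhamel f s y := heq.symm
  have hUpos : 0 < duhamel f s y := (mul_nonneg hN (hρ.pos y).le).trans_lt hUs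
  have hs0 : 0 < s := by
    refine lt_of_le_of_ne hsy.1.1 ?_
    rintro rfl
    exact hUpos.ne' (duhamel_zero f y)
  have htouch : l * duhamel f s y ≤ f s y :=
    mul_duhamel_le_of_touches_barrier hf hfc hρ.growth hρ.continuous hs0
      (fun r hr z => hle (r, z) ⟨⟨hr.1, hr.2.trans hsy.1.2⟩, Set.mem_univ z⟩) heq
  nlinarith [hsource s hsy.1 y hUs]

end Comparison

lemma add_rpow_le_two_rpow_mul {a b θ : ℝ} (ha : 0 ≤ a) (hb : 0 ≤ b) (hθ : 0 ≤ θ) :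
    (a + b) ^ θ ≤ 2 ^ θ * (a ^ θ + b ^ θ) := by
  wlog hab : a ≤ b generalizing a b
  · rw [add_comm a, add_comm (a ^ θ)]
    exact this hb ha (le_of_not_ge hab)
  calc (a + b) ^ θ ≤ (2 * b) ^ θ := by gcongr; linarith
    _ = 2 ^ θ * b ^ θ := Real.mul_rpow zero_le_two hb
    _ ≤ 2 ^ θ * (a ^ θ + b ^ θ) := by gcongr; exact le_add_of_nonneg_left (by positivity)

section PolynomialWeight

variable {E : Type*} [NormedAddCommGroup E] {θ : ℝ}

/-- The weight `1 + ‖x - x₀‖ ^ θ` of the norm of `C_{θ,x₀}`. -/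
noncomputable def polynomialWeight (θ : ℝ) (x₀ x : E) : ℝ := 1 + ‖x - x₀‖ ^ θ

lemma one_le_polynomialWeight (θ : ℝ) (x₀ x : E) : 1 ≤ polynomialWeight θ x₀ x :=
  le_add_of_nonneg_right (by positivity)

lemma polynomialWeight_pos (θ : ℝ) (x₀ x : E) : 0 < polynomialWeight θ x₀ x :=
  one_pos.trans_le (one_le_polynomialWeight θ x₀ x)

lemma continuous_polynomialWeight (hθ : 0 ≤ θ) (x₀ : E) : Continuous (polynomialWeight θ x₀) :=
  continuous_const.add ((continuous_id.sub continuous_const).norm.rpow_const fun _ => .inr hθ)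

lemma hasSubgaussianGrowth_polynomialWeight (hθ : 0 ≤ θ) (x₀ : E) :
    HasSubgaussianGrowth fun _ : Unit => polynomialWeight θ x₀ := by
  refine .of_norm_sub x₀ fun ε hε => ⟨1 + (θ / 2 / ε) ^ (θ / 2), by positivity, fun _ y => ?_⟩
  have hpow : ‖y - x₀‖ ^ θ ≤ (θ / 2 / ε) ^ (θ / 2) * Real.exp (ε * ‖y - x₀‖ ^ 2) :=
    calc ‖y - x₀‖ ^ θ = |‖y - x₀‖ ^ 2| ^ (θ / 2) := by
          rw [abs_sq, ← Real.rpow_natCast_mul (norm_nonneg _), Nat.cast_ofNat,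
            mul_div_cancel₀ θ two_ne_zero]
      _ ≤ (θ / 2 / |ε|) ^ (θ / 2) * Real.exp (|ε| * |‖y - x₀‖ ^ 2|) :=
          rpow_abs_le_mul_exp_abs _ (by positivity) hε.ne'
      _ = (θ / 2 / ε) ^ (θ / 2) * Real.exp (ε * ‖y - x₀‖ ^ 2) := by
          rw [abs_sq, abs_of_pos hε]
  have hone : 1 ≤ Real.exp (ε * ‖y - x₀‖ ^ 2) := Real.one_le_exp (by positivity)
  rw [abs_of_pos (polynomialWeight_pos θ x₀ y), polynomialWeight, add_mul, one_mul]
  exact add_le_add hone hpow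

lemma polynomialWeight_add_le (hθ : 0 ≤ θ) (x₀ x v : E) :
    polynomialWeight θ x₀ (x + v) ≤
      2 ^ θ * polynomialWeight θ 0 v * polynomialWeight θ x₀ x := by
  have htwo : (1 : ℝ) ≤ 2 ^ θ := Real.one_le_rpow one_le_two hθ
  have hnorm : ‖x + v - x₀‖ ≤ ‖x - x₀‖ + ‖v‖ := by
    rw [add_sub_right_comm]
    exact norm_add_le _ _
  have hprod : 0 ≤ ‖x - x₀‖ ^ θ * ‖v‖ ^ θ := by positivity
  calc polynomialWeight θ x₀ (x + v)
      ≤ 1 + 2 ^ θ * (‖x - x₀‖ ^ θ + ‖v‖ ^ θ) := by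
        rw [polynomialWeight]
        gcongr
        exact (Real.rpow_le_rpow (norm_nonneg _) hnorm hθ).trans
          (add_rpow_le_two_rpow_mul (norm_nonneg _) (norm_nonneg _) hθ)
    _ ≤ 2 ^ θ * polynomialWeight θ 0 v * polynomialWeight θ x₀ x := by
        rw [polynomialWeight, polynomialWeight, sub_zero]
        nlinarith

lemma polynomialWeight_le_add [NormedSpace ℝ E] (hθ : 0 ≤ θ) (x₀ x v : E) :
    polynomialWeight θ x₀ x ≤ polynomialWeight θ x₀ (x + v) + polynomialWeight θ x₀ (x - v) := by
  have hmid : 2 * ‖x - x₀‖ ≤ ‖x + v - x₀‖ + ‖x - v - x₀‖ := by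
    calc 2 * ‖x - x₀‖ = ‖(x + v - x₀) + (x - v - x₀)‖ := by
          rw [show (x + v - x₀) + (x - v - x₀) = (2 : ℝ) • (x - x₀) by module, norm_smul,
            Real.norm_two]
      _ ≤ ‖x + v - x₀‖ + ‖x - v - x₀‖ := norm_add_le _ _
  have hpow : ‖x - x₀‖ ^ θ ≤ ‖x + v - x₀‖ ^ θ + ‖x - v - x₀‖ ^ θ := by
    refine le_of_mul_le_mul_left ?_ (show (0 : ℝ) < 2 ^ θ by positivity)
    rw [← Real.mul_rpow zero_le_two (norm_nonneg _)]
    exact (Real.rpow_le_rpow (by positivity) hmid hθ).trans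
      (add_rpow_le_two_rpow_mul (norm_nonneg _) (norm_nonneg _) hθ)
  simp only [polynomialWeight]
  linarith

variable [InnerProductSpace ℝ E]

lemma isComparisonWeight_polynomialWeight (hθ : 0 ≤ θ) (x₀ : E) :
    IsComparisonWeight (polynomialWeight θ x₀) where
  continuous := continuous_polynomialWeight hθ x₀
  growth := hasSubgaussianGrowth_polynomialWeight hθ x₀
  pos := polynomialWeight_pos θ x₀
  le_add := polynomialWeight_le_add hθ x₀

lemma heatSemigroup_polynomialWeight_le [FiniteDimensional ℝ E] [MeasurableSpace E] [BorelSpace E]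
    (hθ : 0 ≤ θ) (x₀ : E) {t T : ℝ} (ht : t ≤ T) (x : E) :
    heatSemigroup t (polynomialWeight θ x₀) x ≤
      2 ^ θ * heatSemigroup T (polynomialWeight θ (0 : E)) 0 * polynomialWeight θ x₀ x := by
  have hint (y₀ y : E) (s : ℝ) := (hasSubgaussianGrowth_polynomialWeight hθ y₀).integrable_shift
    (i := ()) (continuous_polynomialWeight hθ y₀) s y
  rw [heatSemigroup, heatSemigroup, ← integral_const_mul, ← integral_mul_const]
  refine integral_mono (hint x₀ x t) (((hint 0 0 T).const_mul _).mul_const _) fun ξ =>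
    (polynomialWeight_add_le hθ x₀ x _).trans ?_
  have htime : ‖√t • ξ‖ ≤ ‖√T • ξ‖ := by
    rw [norm_smul, norm_smul, Real.norm_of_nonneg (Real.sqrt_nonneg t),
      Real.norm_of_nonneg (Real.sqrt_nonneg T)]
    gcongr
  simp only [polynomialWeight, zero_add, sub_zero]
  gcongr

end PolynomialWeight

lemma exists_rpow_le_mul_sq_add {γ ε : ℝ} (hγ₀ : 0 ≤ γ) (hγ₂ : γ < 2) (hε : 0 < ε) :
    ∃ C ≥ 0, ∀ n : ℝ, 0 ≤ n → n ^ γ ≤ ε * n ^ 2 + C := by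
  -- `L` is the crossover point, where `L ^ γ = ε * L ^ 2`.
  set L := ε ^ (γ - 2)⁻¹
  have hL₀ : 0 < L := by positivity
  refine ⟨L ^ γ, by positivity, fun n hn => ?_⟩
  rcases le_total n L with hnL | hLn
  · exact (Real.rpow_le_rpow hn hnL hγ₀).trans (le_add_of_nonneg_left (by positivity))
  · have hsmall : n ^ (γ - 2) ≤ ε :=
      calc n ^ (γ - 2) ≤ L ^ (γ - 2) :=
            Real.rpow_le_rpow_of_nonpos hL₀ hLn (sub_nonpos.2 hγ₂.le)
        _ = ε := Real.rpow_inv_rpow hε.le (sub_neg.2 hγ₂).ne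
    calc n ^ γ = n ^ (γ - 2) * n ^ 2 := by
          rw [← Real.rpow_natCast, ← Real.rpow_add (hL₀.trans_le hLn), Nat.cast_ofNat,
            sub_add_cancel]
      _ ≤ ε * n ^ 2 := by gcongr
      _ ≤ ε * n ^ 2 + L ^ γ := le_add_of_nonneg_right (by positivity)

section Reaction

variable {F : Type*} [NormedAddCommGroup F]

lemma mul_polynomialWeight_rpow_le {B θ ν : ℝ} (hB : 0 ≤ B) (hν : 0 ≤ ν) (x₀ x : F) :
    (B * polynomialWeight θ x₀ x) ^ ν ≤ (B * 2) ^ ν * (1 + ‖x - x₀‖ ^ (θ * ν)) := by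
  rw [Real.mul_rpow hB (polynomialWeight_pos θ x₀ x).le, Real.mul_rpow hB zero_le_two, mul_assoc,
    Real.rpow_mul (norm_nonneg _)]
  gcongr
  simpa only [polynomialWeight, Real.one_rpow] using
    add_rpow_le_two_rpow_mul zero_le_one (by positivity : 0 ≤ ‖x - x₀‖ ^ θ) hν

/-- The composite exponents `β` and `θ * ν` are both smaller than `2`, so the double exponential
bound on `φ` becomes subgaussian along `w`. -/
lemma hasSubgaussianGrowth_reaction {ι : Type*} {φ : ι → F → ℝ → ℝ} {w : ι → F → ℝ} {x₀ : F}
    {K B β ν θ : ℝ} (hK : 0 < K) (hB : 0 < B) (hβ : β ∈ Set.Ico (0 : ℝ) 2) (hν : 0 ≤ ν)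
    (hθ : 0 ≤ θ) (hθν : θ * ν < 2)
    (hφ : ∀ i x u, |φ i x u| ≤ K * Real.exp (K * (‖x - x₀‖ ^ β + |u| ^ ν)))
    (hw : ∀ i x, |w i x| ≤ B * polynomialWeight θ x₀ x) :
    HasSubgaussianGrowth fun i x => φ i x (w i x) := by
  refine .of_norm_sub x₀ fun ε hε => ?_
  set D := (B * 2) ^ ν
  have hD₀ : 0 < D := by positivity
  obtain ⟨C₁, -, h₁⟩ := exists_rpow_le_mul_sq_add hβ.1 hβ.2 (ε := ε / (2 * K)) (by positivity)
  obtain ⟨C₂, -, h₂⟩ := exists_rpow_le_mul_sq_add (mul_nonneg hθ hν) hθν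
    (ε := ε / (2 * K * D)) (by positivity)
  refine ⟨K * Real.exp (K * (C₁ + D * (1 + C₂))), by positivity, fun i x => (hφ i x _).trans ?_⟩
  rw [mul_assoc, ← Real.exp_add]
  gcongr
  set n := ‖x - x₀‖
  have hwν : |w i x| ^ ν ≤ D * (1 + n ^ (θ * ν)) :=
    (Real.rpow_le_rpow (abs_nonneg _) (hw i x) hν).trans
      (mul_polynomialWeight_rpow_le hB.le hν x₀ x)
  calc K * (n ^ β + |w i x| ^ ν)
      ≤ K * ((ε / (2 * K) * n ^ 2 + C₁) + D * (1 + (ε / (2 * K * D) * n ^ 2 + C₂))) := by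
        gcongr
        · exact h₁ n (norm_nonneg _)
        · exact hwν.trans (by gcongr; exact h₂ n (norm_nonneg _))
    _ = K * (C₁ + D * (1 + C₂)) + ε * n ^ 2 := by field_simp; ring

end Reaction

section WeightedSpace

variable {d : ℕ} {T θ : ℝ} {x₀ : EuclideanSpace ℝ (Fin d)}
  {z z' : ℝ → EuclideanSpace ℝ (Fin d) → ℝ}

namespace memC

lemma exists_abs_le (hz : memC d T θ x₀ z) :
    ∃ B > 0, ∀ t ∈ Set.Icc 0 T, ∀ x, |z t x| ≤ B * polynomialWeight θ x₀ x := by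
  obtain ⟨R, hR⟩ := hz.2 1 one_pos
  obtain ⟨B, hB⟩ := (isCompact_Icc.prod (isCompact_closedBall 0 R)).exists_bound_of_continuousOn
    (hz.1.mono (Set.prod_mono_right (Set.subset_univ _)))
  refine ⟨max B 1, lt_max_of_lt_right one_pos, fun t ht x => ?_⟩
  rcases le_total R ‖x‖ with hx | hx
  · calc |z t x| ≤ 1 * polynomialWeight θ x₀ x :=
          ((div_lt_iff₀ (polynomialWeight_pos θ x₀ x)).1 (hR x hx t ht)).le
      _ ≤ max B 1 * polynomialWeight θ x₀ x := by
          gcongr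
          exacts [(polynomialWeight_pos θ x₀ x).le, le_max_right B 1]
  · calc |z t x| ≤ max B 1 := (hB (t, x) ⟨ht, mem_closedBall_zero_iff.2 hx⟩).trans (le_max_left B 1)
      _ ≤ max B 1 * polynomialWeight θ x₀ x :=
          le_mul_of_one_le_right (by positivity) (one_le_polynomialWeight θ x₀ x)

lemma sub (hz : memC d T θ x₀ z) (hz' : memC d T θ x₀ z') :
    memC d T θ x₀ fun t x => z t x - z' t x := by
  refine ⟨hz.1.sub hz'.1, fun ε hε => ?_⟩
  obtain ⟨R, hR⟩ := hz.2 (ε / 2) (half_pos hε)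
  obtain ⟨R', hR'⟩ := hz'.2 (ε / 2) (half_pos hε)
  refine ⟨max R R', fun x hx t ht => ?_⟩
  calc |z t x - z' t x| / (1 + ‖x - x₀‖ ^ θ)
      ≤ (|z t x| + |z' t x|) / (1 + ‖x - x₀‖ ^ θ) := by gcongr; exact abs_sub _ _
    _ = |z t x| / (1 + ‖x - x₀‖ ^ θ) + |z' t x| / (1 + ‖x - x₀‖ ^ θ) := add_div _ _ _
    _ < ε / 2 + ε / 2 :=
        add_lt_add (hR x (le_of_max_le_left hx) t ht) (hR' x (le_of_max_le_right hx) t ht)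
    _ = ε := add_halves ε

lemma tendsto_div_polynomialWeight (hz : memC d T θ x₀ z) :
    Tendsto (fun p : ℝ × EuclideanSpace ℝ (Fin d) => z p.1 p.2 / polynomialWeight θ x₀ p.2)
      (cocompact _ ⊓ 𝓟 (Set.Icc 0 T ×ˢ Set.univ)) (𝓝 0) := by
  rw [Metric.tendsto_nhds]
  intro ε hε
  obtain ⟨R, hR⟩ := hz.2 ε hε
  have hcompact := (isCompact_Icc (a := 0) (b := T)).prod
    (isCompact_closedBall (0 : EuclideanSpace ℝ (Fin d)) R)
  rw [eventually_inf_principal]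
  filter_upwards [hcompact.compl_mem_cocompact] with p hp hpT
  have hpR : R ≤ ‖p.2‖ :=
    le_of_not_ge fun h => hp ⟨hpT.1, mem_closedBall_zero_iff.2 h⟩
  rw [Real.dist_0_eq_abs, abs_div, abs_of_pos (polynomialWeight_pos θ x₀ p.2)]
  exact hR p.2 hpR p.1 hpT.1

lemma abs_le_wNorm_mul (hz : memC d T θ x₀ z) {t : ℝ} (ht : t ∈ Set.Icc 0 T)
    (x : EuclideanSpace ℝ (Fin d)) :
    |z t x| ≤ wNorm d T θ x₀ z * polynomialWeight θ x₀ x := by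
  obtain ⟨B, hB, hzB⟩ := hz.exists_abs_le
  have hquot (s : Set.Icc 0 T) (y) : |z s y| / (1 + ‖y - x₀‖ ^ θ) ≤ B :=
    (div_le_iff₀ (polynomialWeight_pos θ x₀ y)).2 (hzB s s.2 y)
  rw [← div_le_iff₀ (polynomialWeight_pos θ x₀ x)]
  calc |z t x| / (1 + ‖x - x₀‖ ^ θ)
      ≤ ⨆ y, |z t y| / (1 + ‖y - x₀‖ ^ θ) :=
        le_ciSup (f := fun y => |z t y| / (1 + ‖y - x₀‖ ^ θ))
          ⟨B, Set.forall_mem_range.2 (hquot ⟨t, ht⟩)⟩ x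
    _ ≤ wNorm d T θ x₀ z :=
        le_ciSup (f := fun s : Set.Icc 0 T => ⨆ y, |z s y| / (1 + ‖y - x₀‖ ^ θ))
          ⟨B, Set.forall_mem_range.2 fun s => Real.iSup_le (hquot s) hB.le⟩ ⟨t, ht⟩

end memC

lemma wNorm_nonneg : 0 ≤ wNorm d T θ x₀ z :=
  Real.iSup_nonneg fun _ => Real.iSup_nonneg fun _ => by positivity

lemma wNorm_sub_comm :
    wNorm d T θ x₀ (fun t x => z t x - z' t x) = wNorm d T θ x₀ fun t x => z' t x - z t x := by
  simp only [wNorm, abs_sub_comm]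

lemma wNorm_le {B : ℝ} (hB : 0 ≤ B)
    (hz : ∀ t ∈ Set.Icc 0 T, ∀ x, |z t x| ≤ B * polynomialWeight θ x₀ x) :
    wNorm d T θ x₀ z ≤ B :=
  Real.iSup_le (fun t => Real.iSup_le (fun x =>
    (div_le_iff₀ (polynomialWeight_pos θ x₀ x)).2 (hz t t.2 x)) hB) hB

end WeightedSpace

section MildSolution

/-- The source `s ↦ φ s · (w s ·)` of a mild solution on `[0, T]`, frozen at its endpoint values
outside `[0, T]` so that it is defined and continuous for all times. -/
noncomputable def reactionTerm {F : Type*} {T : ℝ} (hT : 0 ≤ T) (φ : ℝ → F → ℝ → ℝ)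
    (w : ℝ → F → ℝ) : ℝ → F → ℝ :=
  Set.IccExtend hT fun s y => φ s y (w s y)

lemma reactionTerm_of_mem {F : Type*} {T : ℝ} (hT : 0 ≤ T) (φ : ℝ → F → ℝ → ℝ) (w : ℝ → F → ℝ)
    {s : ℝ} (hs : s ∈ Set.Icc 0 T) (y : F) : reactionTerm hT φ w s y = φ s y (w s y) := by
  rw [reactionTerm, Set.IccExtend_of_mem hT _ hs]

lemma continuous_reactionTerm {F : Type*} [TopologicalSpace F] {T : ℝ} (hT : 0 ≤ T)
    {φ : ℝ → F → ℝ → ℝ} {w : ℝ → F → ℝ}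
    (hφ : ContinuousOn (fun p : ℝ × F × ℝ => φ p.1 p.2.1 p.2.2)
      (Set.Icc 0 T ×ˢ Set.univ ×ˢ Set.univ))
    (hw : ContinuousOn (fun p : ℝ × F => w p.1 p.2) (Set.Icc 0 T ×ˢ Set.univ)) :
    Continuous fun p : ℝ × F => reactionTerm hT φ w p.1 p.2 := by
  have htime : Continuous fun p : ℝ × F => (Set.projIcc 0 T hT p.1 : ℝ) :=
    continuous_subtype_val.comp (continuous_projIcc.comp continuous_fst)
  have hwc : Continuous fun p : ℝ × F => w (Set.projIcc 0 T hT p.1) p.2 :=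
    hw.comp_continuous (htime.prodMk continuous_snd) fun p => ⟨Subtype.coe_prop _, Set.mem_univ _⟩
  exact hφ.comp_continuous (htime.prodMk (continuous_snd.prodMk hwc))
    fun p => ⟨Subtype.coe_prop _, Set.mem_univ _, Set.mem_univ _⟩

variable {d : ℕ} {T θ κ : ℝ} {x₀ : EuclideanSpace ℝ (Fin d)}
  {φ : ℝ → EuclideanSpace ℝ (Fin d) → ℝ → ℝ} {z z₁ z₂ w w₁ w₂ : ℝ → EuclideanSpace ℝ (Fin d) → ℝ}

/-- `w` is a mild solution in `C_{θ,x₀}` of `∂ₜ w = Δw / 2 + φ(t, x, w)` on `[0, T]`, perturbed by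
the additive inhomogeneity `z`. The growth condition makes the double integral converge. -/
structure IsMildSolution (d : ℕ) (T θ : ℝ) (x₀ : EuclideanSpace ℝ (Fin d))
    (φ : ℝ → EuclideanSpace ℝ (Fin d) → ℝ → ℝ) (z w : ℝ → EuclideanSpace ℝ (Fin d) → ℝ) :
    Prop where
  memC_inhomogeneity : memC d T θ x₀ z
  memC_solution : memC d T θ x₀ w
  growth : HasSubgaussianGrowth fun (s : Set.Icc 0 T) y => φ s y (w s y)
  eq_integral_add : ∀ t ∈ Set.Icc (0 : ℝ) T, ∀ x : EuclideanSpace ℝ (Fin d),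
    w t x = (∫ s in Set.Ioc (0 : ℝ) t,
      ∫ y, heatKernel d (t - s) (x - y) * φ s y (w s y)) + z t x

/-- The Lipschitz constant of the solution map: a bound for the heat barrier over the weight. By
the submultiplicativity of the weight it suffices to average the weight centred at the origin. -/
noncomputable def lipschitzConstant (d : ℕ) (T θ κ : ℝ) : ℝ :=
  2 * (Real.exp ((2 * |κ| + 1) * T) *
    (2 ^ θ * heatSemigroup T (polynomialWeight θ (0 : EuclideanSpace ℝ (Fin d))) 0)) + 1

lemma lipschitzConstant_pos (d : ℕ) (T θ κ : ℝ) : 0 < lipschitzConstant d T θ κ := by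
  have hmean : 0 ≤ heatSemigroup T (polynomialWeight θ (0 : EuclideanSpace ℝ (Fin d))) 0 :=
    integral_nonneg fun _ => (polynomialWeight_pos _ _ _).le
  rw [lipschitzConstant]
  positivity

lemma two_mul_heatBarrier_add_le_lipschitzConstant_mul (hθ : 0 ≤ θ) {t : ℝ} (ht : t ≤ T)
    (x : EuclideanSpace ℝ (Fin d)) :
    2 * heatBarrier (2 * |κ| + 1) (polynomialWeight θ x₀) t x + polynomialWeight θ x₀ x ≤
      lipschitzConstant d T θ κ * polynomialWeight θ x₀ x := by
  have hheat := heatSemigroup_polynomialWeight_le hθ x₀ ht x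
  have hmean : 0 ≤ heatSemigroup t (polynomialWeight θ x₀) x :=
    integral_nonneg fun _ => (polynomialWeight_pos _ _ _).le
  rw [lipschitzConstant, add_mul, one_mul, mul_assoc, mul_assoc, heatBarrier]
  gcongr

namespace IsMildSolution

lemma hasSubgaussianGrowth_reactionTerm (h : IsMildSolution d T θ x₀ φ z w) (hT : 0 ≤ T) :
    HasSubgaussianGrowth (reactionTerm hT φ w) :=
  h.growth.reindex (Set.projIcc 0 T hT)

lemma eq_duhamel_add (h : IsMildSolution d T θ x₀ φ z w) (hT : 0 ≤ T)
    (hc : Continuous fun p : ℝ × EuclideanSpace ℝ (Fin d) => reactionTerm hT φ w p.1 p.2)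
    {t : ℝ} (ht : t ∈ Set.Icc 0 T) (x : EuclideanSpace ℝ (Fin d)) :
    w t x = duhamel (reactionTerm hT φ w) t x + z t x := by
  rw [h.eq_integral_add t ht x, duhamel, intervalIntegral.integral_of_le ht.1]
  congr 1
  refine integral_congr_ae ?_
  filter_upwards [ae_restrict_mem measurableSet_Ioc, Measure.ae_ne (volume.restrict _) t]
    with s hs hst
  rw [← integral_heatKernel_sub_mul (sub_pos.2 (lt_of_le_of_ne hs.2 hst)) (by fun_prop)]
  simp only [reactionTerm_of_mem hT φ w ⟨hs.1.le, hs.2.trans ht.2⟩]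

lemma of_exp_growth {K β ν : ℝ} (hK : 0 < K) (hβ : β ∈ Set.Ico (0 : ℝ) 2) (hν : 0 < ν)
    (hθ : θ ∈ Set.Ioo (0 : ℝ) (2 / ν))
    (hφ : ∀ t ∈ Set.Icc (0 : ℝ) T, ∀ (x : EuclideanSpace ℝ (Fin d)) (u : ℝ),
      |φ t x u| ≤ K * Real.exp (K * (‖x - x₀‖ ^ β + |u| ^ ν)))
    (hz : memC d T θ x₀ z) (hw : memC d T θ x₀ w)
    (h : ∀ t ∈ Set.Icc (0 : ℝ) T, ∀ x : EuclideanSpace ℝ (Fin d),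
      w t x = (∫ s in Set.Ioc (0 : ℝ) t,
        ∫ y, heatKernel d (t - s) (x - y) * φ s y (w s y)) + z t x) :
    IsMildSolution d T θ x₀ φ z w := by
  obtain ⟨B, hB, hwB⟩ := hw.exists_abs_le
  have hθν : θ * ν < 2 := (lt_div_iff₀ hν).1 hθ.2
  exact ⟨hz, hw, hasSubgaussianGrowth_reaction hK hB hβ hν.le hθ.1.le hθν
    (fun s => hφ s s.2) fun s => hwB s s.2, h⟩

variable (hφc : ContinuousOn (fun p : ℝ × EuclideanSpace ℝ (Fin d) × ℝ => φ p.1 p.2.1 p.2.2)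
    (Set.Icc 0 T ×ˢ Set.univ ×ˢ Set.univ))
  (hφ : ∀ t ∈ Set.Icc (0 : ℝ) T, ∀ (x : EuclideanSpace ℝ (Fin d)) (u₁ u₂ : ℝ),
    u₂ < u₁ → φ t x u₁ - φ t x u₂ ≤ κ * (u₁ - u₂))
  (h₁ : IsMildSolution d T θ x₀ φ z₁ w₁) (h₂ : IsMildSolution d T θ x₀ φ z₂ w₂)
include hφc hφ h₁ h₂

lemma sub_sub_sub_le_heatBarrier (hT : 0 ≤ T) (hθ : 0 ≤ θ) {t : ℝ} (ht : t ∈ Set.Icc 0 T)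
    (x : EuclideanSpace ℝ (Fin d)) :
    w₁ t x - w₂ t x - (z₁ t x - z₂ t x) ≤ 2 * wNorm d T θ x₀ (fun t x => z₁ t x - z₂ t x) *
      heatBarrier (2 * |κ| + 1) (polynomialWeight θ x₀) t x := by
  set N := wNorm d T θ x₀ fun t x => z₁ t x - z₂ t x
  have hc₁ := continuous_reactionTerm hT hφc h₁.memC_solution.1
  have hc₂ := continuous_reactionTerm hT hφc h₂.memC_solution.1
  have hg₁ := h₁.hasSubgaussianGrowth_reactionTerm hT
  have hg₂ := h₂.hasSubgaussianGrowth_reactionTerm hT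
  have hz := h₁.memC_inhomogeneity.sub h₂.memC_inhomogeneity
  set f := fun s y => reactionTerm hT φ w₁ s y - reactionTerm hT φ w₂ s y
  have hduhamel {s : ℝ} (hs : s ∈ Set.Icc 0 T) (y : EuclideanSpace ℝ (Fin d)) :
      duhamel f s y = w₁ s y - w₂ s y - (z₁ s y - z₂ s y) := by
    rw [duhamel_sub hg₁ hc₁ hg₂ hc₂, h₁.eq_duhamel_add hT hc₁ hs, h₂.eq_duhamel_add hT hc₂ hs]
    ring
  rw [← hduhamel ht x]
  refine duhamel_le_of_source_le (hg₁.sub hg₂) (hc₁.sub hc₂)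
    (isComparisonWeight_polynomialWeight hθ x₀) (abs_nonneg κ) wNorm_nonneg
    (fun s hs y hlt => ?_) ?_ ht x
  · have hzsy := abs_le.1 (hz.abs_le_wNorm_mul hs y)
    rw [hduhamel hs y] at hlt ⊢
    have hw : w₂ s y < w₁ s y := by linarith
    calc f s y = φ s y (w₁ s y) - φ s y (w₂ s y) := by
          simp only [f, reactionTerm_of_mem hT φ _ hs]
      _ ≤ κ * (w₁ s y - w₂ s y) := hφ s hs y _ _ hw
      _ ≤ |κ| * (w₁ s y - w₂ s y) :=
          mul_le_mul_of_nonneg_right (le_abs_self κ) (sub_pos.2 hw).le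
      _ ≤ |κ| * (w₁ s y - w₂ s y - (z₁ s y - z₂ s y) + N * polynomialWeight θ x₀ y) := by
          gcongr
          linarith
  · refine ((h₁.memC_solution.sub h₂.memC_solution).sub hz).tendsto_div_polynomialWeight.congr' ?_
    filter_upwards [mem_inf_of_right (mem_principal_self _)] with p hp
    rw [hduhamel hp.1]

lemma sub_le (hT : 0 ≤ T) (hθ : 0 ≤ θ) {t : ℝ} (ht : t ∈ Set.Icc 0 T)
    (x : EuclideanSpace ℝ (Fin d)) :
    w₁ t x - w₂ t x ≤ lipschitzConstant d T θ κ *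
      wNorm d T θ x₀ (fun t x => z₁ t x - z₂ t x) * polynomialWeight θ x₀ x := by
  set N := wNorm d T θ x₀ fun t x => z₁ t x - z₂ t x
  have hN : 0 ≤ N := wNorm_nonneg
  set B := heatBarrier (2 * |κ| + 1) (polynomialWeight θ x₀) t x
  have hw : w₁ t x - w₂ t x - (z₁ t x - z₂ t x) ≤ 2 * N * B :=
    sub_sub_sub_le_heatBarrier hφc hφ h₁ h₂ hT hθ ht x
  have hz : z₁ t x - z₂ t x ≤ N * polynomialWeight θ x₀ x :=
    le_of_abs_le ((h₁.memC_inhomogeneity.sub h₂.memC_inhomogeneity).abs_le_wNorm_mul ht x)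
  calc w₁ t x - w₂ t x ≤ N * (2 * B + polynomialWeight θ x₀ x) := by linarith
    _ ≤ N * (lipschitzConstant d T θ κ * polynomialWeight θ x₀ x) := by
        gcongr
        exact two_mul_heatBarrier_add_le_lipschitzConstant_mul hθ ht.2 x
    _ = lipschitzConstant d T θ κ * N * polynomialWeight θ x₀ x := by ring

end IsMildSolution

theorem inhomogeneous_reaction_map_lipschitz_general (hT : 0 ≤ T) (hθ : 0 ≤ θ)
    (hφc : ContinuousOn (fun p : ℝ × EuclideanSpace ℝ (Fin d) × ℝ => φ p.1 p.2.1 p.2.2)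
      (Set.Icc 0 T ×ˢ Set.univ ×ˢ Set.univ))
    (hφ : ∀ t ∈ Set.Icc (0 : ℝ) T, ∀ (x : EuclideanSpace ℝ (Fin d)) (u₁ u₂ : ℝ),
      u₂ < u₁ → φ t x u₁ - φ t x u₂ ≤ κ * (u₁ - u₂))
    (h₁ : IsMildSolution d T θ x₀ φ z₁ w₁) (h₂ : IsMildSolution d T θ x₀ φ z₂ w₂) :
    wNorm d T θ x₀ (fun t x => w₁ t x - w₂ t x) ≤
      lipschitzConstant d T θ κ * wNorm d T θ x₀ (fun t x => z₁ t x - z₂ t x) := by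
  refine wNorm_le (mul_nonneg (lipschitzConstant_pos d T θ κ).le wNorm_nonneg) fun t ht x =>
    abs_sub_le_iff.2 ⟨IsMildSolution.sub_le hφc hφ h₁ h₂ hT hθ ht x, ?_⟩
  rw [wNorm_sub_comm]
  exact IsMildSolution.sub_le hφc hφ h₂ h₁ hT hθ ht x

end MildSolution

/-- Lipschitz continuity of the map `z ↦ L(z)` where `L(z)` solves the
perturbed heat equation with inhomogeneous half-Lipschitz reaction term `φ`:
the constant depends only on `T`, `θ`, `κ` (not on `x₀`, `K`, `β`, nor on `φ`
beyond its half-Lipschitz constant `κ`). -/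
theorem inhomogeneous_reaction_map_lipschitz
    (d : ℕ) (hd : 1 ≤ d) (T : ℝ) (hT : 0 < T) (κ ν θ : ℝ) (hν : 0 < ν)
    (hθ : θ ∈ Set.Ioo (0 : ℝ) (2 / ν)) :
    ∃ K' > (0 : ℝ), ∀ (K β : ℝ), 0 < K → β ∈ Set.Ico (0 : ℝ) 2 →
      ∀ (x₀ : EuclideanSpace ℝ (Fin d))
        (φ : ℝ → EuclideanSpace ℝ (Fin d) → ℝ → ℝ),
        ContinuousOn (fun p : ℝ × EuclideanSpace ℝ (Fin d) × ℝ => φ p.1 p.2.1 p.2.2)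
          (Set.Icc 0 T ×ˢ Set.univ ×ˢ Set.univ) →
        (∀ t ∈ Set.Icc (0 : ℝ) T, ∀ (x : EuclideanSpace ℝ (Fin d)) (u₁ u₂ : ℝ),
          u₂ < u₁ → φ t x u₁ - φ t x u₂ ≤ κ * (u₁ - u₂)) →
        (∀ t ∈ Set.Icc (0 : ℝ) T, ∀ (x : EuclideanSpace ℝ (Fin d)) (u : ℝ),
          |φ t x u| ≤ K * Real.exp (K * (‖x - x₀‖ ^ β + |u| ^ ν))) →
        ∀ z₁ z₂ w₁ w₂ : ℝ → EuclideanSpace ℝ (Fin d) → ℝ,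
          memC d T θ x₀ z₁ → memC d T θ x₀ z₂ →
          memC d T θ x₀ w₁ → memC d T θ x₀ w₂ →
          (∀ t ∈ Set.Icc (0 : ℝ) T, ∀ x : EuclideanSpace ℝ (Fin d),
            w₁ t x = (∫ s in Set.Ioc (0 : ℝ) t,
              ∫ y, heatKernel d (t - s) (x - y) * φ s y (w₁ s y)) + z₁ t x) →
          (∀ t ∈ Set.Icc (0 : ℝ) T, ∀ x : EuclideanSpace ℝ (Fin d),
            w₂ t x = (∫ s in Set.Ioc (0 : ℝ) t,
              ∫ y, heatKernel d (t - s) (x - y) * φ s y (w₂ s y)) + z₂ t x) →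
          wNorm d T θ x₀ (fun t x => w₁ t x - w₂ t x) ≤
            K' * wNorm d T θ x₀ (fun t x => z₁ t x - z₂ t x) := by
  refine ⟨lipschitzConstant d T θ κ, lipschitzConstant_pos d T θ κ, ?_⟩
  intro K β hK hβ x₀ φ hφc hφ hφK z₁ z₂ w₁ w₂ hz₁ hz₂ hw₁ hw₂ h₁ h₂
  exact inhomogeneous_reaction_map_lipschitz_general hT.le hθ.1.le hφc hφ
    (.of_exp_growth hK hβ hν hθ hφK hz₁ hw₁ h₁) (.of_exp_growth hK hβ hν hθ hφK hz₂ hw₂ h₂)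
end
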